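/- arXiv:1210.7708 — 2 statements merged into one kernel-verified Lean document; each statement's English description precedes it below -/
import Mathlib

section
/- Let n ≥ 2 and 0 ≤ σ ≤ σ_n. Then for every x ∈ [-1,1], m_{n-1}(x,σ) ≤ m_{n-1}(1,σ); that is, the supremum of |f^{(n-1)}(x)| over f ∈ W^n_∞(σ) is maximal at the endpoint x = 1. -/
open Polynomial Set

/-- `k`-th derivative of the Chebyshev polynomial `T_m`, evaluated at `x`. -/
noncomputable def chebDeriv (m : ℤ) (k : ℕ) (x : ℝ) : ℝ :=
  (derivative^[k] (Polynomial.Chebyshev.T ℝ m)).eval x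

/-- `σ_n = 2^(n-1) n! = T_n^{(n)}(1)`. -/
noncomputable def sigmaN (n : ℕ) : ℝ := 2 ^ (n - 1) * (n.factorial : ℝ)

/-- `f` is `n` times differentiable on the set `s`. -/
def NTimesDiffOn (n : ℕ) (f : ℝ → ℝ) (s : Set ℝ) : Prop :=
  ∀ i < n, DifferentiableOn ℝ (iteratedDerivWithin i f s) s

/-- The class `W^n_∞(σ)` on `[-1,1]`. -/
def memW (n : ℕ) (σ : ℝ) (f : ℝ → ℝ) : Prop :=
  NTimesDiffOn n f (Icc (-1:ℝ) 1) ∧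
  (∀ x ∈ Icc (-1:ℝ) 1, |f x| ≤ 1) ∧
  (∀ x ∈ Icc (-1:ℝ) 1, |iteratedDerivWithin n f (Icc (-1:ℝ) 1) x| ≤ σ)

/-- `m_k(x,σ) = sup { |f^{(k)}(x)| : f ∈ W^n_∞(σ) }`. -/
noncomputable def mval (n k : ℕ) (x σ : ℝ) : ℝ :=
  sSup {y | ∃ f : ℝ → ℝ, memW n σ f ∧
    y = |iteratedDerivWithin k f (Icc (-1:ℝ) 1) x|}

/-- `m_k^*(x,σ) = sup { |f^{(k)}(x)| : f ∈ W^n_∞(σ), f^{(k+1)}(x) = 0 }`. -/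
noncomputable def mstar (n k : ℕ) (x σ : ℝ) : ℝ :=
  sSup {y | ∃ f : ℝ → ℝ, memW n σ f ∧
    iteratedDerivWithin (k+1) f (Icc (-1:ℝ) 1) x = 0 ∧
    y = |iteratedDerivWithin k f (Icc (-1:ℝ) 1) x|}

/-- `μ_k(x₀)`: best constant in the pointwise Markov inequality. -/
noncomputable def muk (n k : ℕ) (x : ℝ) : ℝ :=
  sSup {y | ∃ p : Polynomial ℝ, p.natDegree ≤ n ∧
    (∀ t ∈ Icc (-1:ℝ) 1, |p.eval t| ≤ 1) ∧
    y = |(derivative^[k] p).eval x|}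

/-- `μ_k^*(x₀)`: best constant in the pointwise Schur-type inequality. -/
noncomputable def mukStar (n k : ℕ) (x : ℝ) : ℝ :=
  sSup {y | ∃ p : Polynomial ℝ, p.natDegree ≤ n ∧
    (∀ t ∈ Icc (-1:ℝ) 1, |p.eval t| ≤ 1) ∧
    (derivative^[k+1] p).eval x = 0 ∧
    y = |(derivative^[k] p).eval x|}

/-!
For `0 ≤ a ≤ 2 ^ n` there is a polynomial `p` of degree at most `n + 1`, bounded by `1` on
`[-1, 1]` and with `p.coeff (n + 1) = a`, which maximises some divided difference over `n + 1` nodes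
`S` among all functions bounded by `1`: take the largest possible `p.coeff n`; Kolmogorov's
criterion, obtained from separation and Carathéodory's theorem, then provides the nodes. For
`a = 2 ^ n` this is the Chebyshev polynomial, whose nodes have sum `1`. Testing the two extremal
problems against each other shows that the sum of the nodes increases with `a`, so it is at most
`1` in general.

Let `f ∈ W^{n+1}_∞(σ)`, where `σ = (n + 1)! a`, and `x₀ ∈ [0, 1]`. If `Q^{(n)}(y) ≥ |x₀ - y|`, then
`f^{(n)}(x₀) ≤ (f + σ Q)^{(n)}(ξ)` for every `ξ`, hence `f^{(n)}(x₀)` is at most `n!` times the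
divided difference of `f + σ Q`. The contribution of `f` is largest for `f = p`, and since the nodes
have sum at most `1`, a suitable quadratic majorant (a linear one if `n = 1`) bounds the whole by
`p^{(n)}(1)`. Negative `x₀` follow by reflection.
-/

namespace Karlin

section DividedDifference

variable {F : Type*} [Field F] {S : Finset F}

lemma eval_nodal_id {x : F} (hx : x ∈ S) : (Lagrange.nodal S id).eval x = 0 :=
  Lagrange.eval_nodal_at_node (v := id) hx

lemma card_eq_of_sum_mul_eval_eq_coeff {n : ℕ} (hS : S.card ≤ n + 1) {c : F → F}
    (hc : ∀ q : F[X], q.natDegree ≤ n → ∑ x ∈ S, c x * q.eval x = q.coeff n) :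
    S.card = n + 1 := by
  by_contra hne
  have hmonic := (monic_X_pow (R := F) (n - S.card)).mul (Lagrange.nodal_monic (s := S) (v := id))
  have hdeg : (X ^ (n - S.card) * Lagrange.nodal S id).natDegree = n := by
    rw [(monic_X_pow _).natDegree_mul (Lagrange.nodal_monic (v := id)), natDegree_X_pow,
      Lagrange.natDegree_nodal]
    lia
  have hcoeff := hmonic.coeff_natDegree
  rw [hdeg, ← hc _ hdeg.le, Finset.sum_eq_zero fun x hx ↦ by
    rw [eval_mul, eval_nodal_id hx, mul_zero, mul_zero]] at hcoeff
  exact zero_ne_one hcoeff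

variable [DecidableEq F]

/-- The divided difference of a function at the nodes `S`, given by Lagrange's explicit formula, as
a linear functional of the function. -/
noncomputable def dividedDiff (S : Finset F) : (F → F) →ₗ[F] F :=
  ∑ x ∈ S, Lagrange.nodalWeight S id x • LinearMap.proj x

lemma dividedDiff_apply (S : Finset F) (f : F → F) :
    dividedDiff S f = ∑ x ∈ S, Lagrange.nodalWeight S id x * f x := by
  simp [dividedDiff]

lemma dividedDiff_eval_of_degree_lt {P : F[X]} (hP : P.degree < S.card) :
    dividedDiff S (fun x ↦ P.eval x) = P.coeff (S.card - 1) := by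
  rw [dividedDiff_apply, Lagrange.coeff_eq_sum Function.injective_id.injOn hP]
  refine Finset.sum_congr rfl fun x _ ↦ ?_
  rw [Lagrange.nodalWeight, Finset.prod_inv_distrib, id, div_eq_inv_mul]

lemma nodalWeight_mul_sub {a x : F} (ha : a ∈ S) (hxa : x ≠ a) :
    Lagrange.nodalWeight S id x * (x - a) = Lagrange.nodalWeight (S.erase a) id x := by
  have haS : a ∈ S.erase x := Finset.mem_erase.2 ⟨hxa.symm, ha⟩
  rw [Lagrange.nodalWeight, ← Finset.mul_prod_erase _ _ haS, Finset.erase_right_comm,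
    Lagrange.nodalWeight, mul_right_comm, id, id, inv_mul_cancel₀ (sub_ne_zero.2 hxa), one_mul]

lemma dividedDiff_sub_mul {a : F} (ha : a ∈ S) (f : F → F) :
    dividedDiff S (fun x ↦ (x - a) * f x) = dividedDiff (S.erase a) f := by
  rw [dividedDiff_apply, dividedDiff_apply, ← Finset.add_sum_erase _ _ ha, sub_self, zero_mul,
    mul_zero, zero_add]
  refine Finset.sum_congr rfl fun x hx ↦ ?_
  rw [← mul_assoc, nodalWeight_mul_sub ha (Finset.ne_of_mem_erase hx)]

lemma dividedDiff_insert_pow_succ {a : F} (ha : a ∉ S) (m : ℕ) :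
    dividedDiff (insert a S) (fun x ↦ x ^ (m + 1)) =
      dividedDiff S (fun x ↦ x ^ m) + a * dividedDiff (insert a S) (fun x ↦ x ^ m) := by
  have hsplit : (fun x : F ↦ x ^ (m + 1)) =
      (fun x ↦ (x - a) * x ^ m) + a • fun x ↦ x ^ m := by
    ext x
    simp only [Pi.add_apply, Pi.smul_apply, smul_eq_mul]
    ring
  rw [hsplit, map_add, map_smul, dividedDiff_sub_mul (Finset.mem_insert_self a S),
    Finset.erase_insert ha, smul_eq_mul]

lemma dividedDiff_pow_of_lt_card {m : ℕ} (hm : m < S.card) :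
    dividedDiff S (fun x ↦ x ^ m) = if S.card = m + 1 then 1 else 0 := by
  have hdeg : (X ^ m : F[X]).degree < S.card := by
    rw [degree_X_pow]
    exact_mod_cast hm
  have h := dividedDiff_eval_of_degree_lt hdeg
  simp only [eval_pow, eval_X, coeff_X_pow] at h
  rw [h]
  congr 1
  rw [eq_iff_iff]
  omega

lemma dividedDiff_pow_card (S : Finset F) :
    dividedDiff S (fun x ↦ x ^ S.card) = ∑ x ∈ S, x := by
  induction S using Finset.induction_on with
  | empty => simp [dividedDiff_apply]
  | insert a S ha ih =>
    rw [Finset.card_insert_of_notMem ha, dividedDiff_insert_pow_succ ha, ih,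
      dividedDiff_pow_of_lt_card (by simp [ha]), if_pos (Finset.card_insert_of_notMem ha),
      Finset.sum_insert ha, mul_one, add_comm]

lemma two_mul_dividedDiff_pow_card_succ (S : Finset F) :
    2 * dividedDiff S (fun x ↦ x ^ (S.card + 1)) = (∑ x ∈ S, x) ^ 2 + ∑ x ∈ S, x ^ 2 := by
  induction S using Finset.induction_on with
  | empty => simp [dividedDiff_apply]
  | insert a S ha ih =>
    have hpow := dividedDiff_pow_card (insert a S)
    rw [Finset.card_insert_of_notMem ha, Finset.sum_insert ha] at hpow
    rw [Finset.card_insert_of_notMem ha, dividedDiff_insert_pow_succ ha, hpow,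
      Finset.sum_insert ha, Finset.sum_insert ha]
    linear_combination ih

lemma dividedDiff_eval_eq_sum_range (S : Finset F) {m : ℕ} {P : F[X]} (hP : P.natDegree < m) :
    dividedDiff S (fun x ↦ P.eval x) =
      ∑ i ∈ Finset.range m, P.coeff i * dividedDiff S (fun x ↦ x ^ i) := by
  have heval : (fun x ↦ P.eval x) = ∑ i ∈ Finset.range m, P.coeff i • fun x ↦ x ^ i := by
    ext x
    simp [eval_eq_sum_range' hP x]
  simp only [heval, map_sum, map_smul, smul_eq_mul]

lemma dividedDiff_eval_of_natDegree_le_card {n : ℕ} (hS : S.card = n + 1) {P : F[X]}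
    (hP : P.natDegree ≤ n + 1) :
    dividedDiff S (fun x ↦ P.eval x) = P.coeff n + P.coeff (n + 1) * ∑ x ∈ S, x := by
  have hlow : ∑ i ∈ Finset.range n, P.coeff i * dividedDiff S (fun x ↦ x ^ i) = 0 := by
    refine Finset.sum_eq_zero fun i hi ↦ ?_
    rw [Finset.mem_range] at hi
    rw [dividedDiff_pow_of_lt_card (by lia), if_neg (by lia), mul_zero]
  rw [dividedDiff_eval_eq_sum_range S (Nat.lt_succ_of_le hP), Finset.sum_range_succ,
    Finset.sum_range_succ, hlow, zero_add, dividedDiff_pow_of_lt_card (by lia), if_pos hS, mul_one,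
    ← hS, dividedDiff_pow_card]

lemma eq_nodalWeight_of_sum_mul_eval_eq_coeff {n : ℕ} (hS : S.card = n + 1) {c : F → F}
    (hc : ∀ q : F[X], q.natDegree ≤ n → ∑ x ∈ S, c x * q.eval x = q.coeff n) {x : F}
    (hx : x ∈ S) : c x = Lagrange.nodalWeight S id x := by
  have hdeg : (Lagrange.nodal (S.erase x) id).natDegree = n := by
    rw [Lagrange.natDegree_nodal, Finset.card_erase_of_mem hx, hS, Nat.add_sub_cancel]
  have hcoeff := (Lagrange.nodal_monic (s := S.erase x) (v := id)).coeff_natDegree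
  rw [hdeg, ← hc _ hdeg.le, Finset.sum_eq_single_of_mem x hx fun y hy hyx ↦ by
    rw [eval_nodal_id (Finset.mem_erase.2 ⟨hyx, hy⟩), mul_zero]] at hcoeff
  rw [Lagrange.nodalWeight_eq_eval_nodal_erase_inv, id]
  exact eq_inv_of_mul_eq_one_left hcoeff

end DividedDifference

section ExtremalPair

/-- `p` has degree at most `n + 1`, is bounded by `1` on `[-1, 1]`, and takes at each of the `n + 1`
nodes `S ⊆ [-1, 1]` the value `±1` with the sign of the corresponding weight of the divided
difference. Thus `p` maximises the divided difference over `S` among functions bounded by `1`. -/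
structure IsExtremalPair (n : ℕ) (S : Finset ℝ) (p : ℝ[X]) : Prop where
  card_eq : S.card = n + 1
  subset_Icc : ↑S ⊆ Icc (-1 : ℝ) 1
  natDegree_le : p.natDegree ≤ n + 1
  abs_eval_le_one : ∀ x ∈ Icc (-1 : ℝ) 1, |p.eval x| ≤ 1
  nodalWeight_mul_eval : ∀ x ∈ S,
    Lagrange.nodalWeight S id x * p.eval x = |Lagrange.nodalWeight S id x|

variable {n : ℕ} {S S' : Finset ℝ} {p p' : ℝ[X]}

namespace IsExtremalPair

lemma dividedDiff_eval (h : IsExtremalPair n S p) :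
    dividedDiff S (fun x ↦ p.eval x) = p.coeff n + p.coeff (n + 1) * ∑ x ∈ S, x :=
  dividedDiff_eval_of_natDegree_le_card h.card_eq h.natDegree_le

lemma dividedDiff_le (h : IsExtremalPair n S p) {f : ℝ → ℝ} (hf : ∀ x ∈ S, |f x| ≤ 1) :
    dividedDiff S f ≤ dividedDiff S (fun x ↦ p.eval x) := by
  rw [dividedDiff_apply, dividedDiff_apply]
  refine Finset.sum_le_sum fun x hx ↦ ?_
  rw [h.nodalWeight_mul_eval x hx]
  calc Lagrange.nodalWeight S id x * f x ≤ |Lagrange.nodalWeight S id x| * |f x| :=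
        (le_abs_self _).trans_eq (abs_mul _ _)
    _ ≤ |Lagrange.nodalWeight S id x| := mul_le_of_le_one_right (abs_nonneg _) (hf x hx)

lemma sum_le_sum (h : IsExtremalPair n S p) (h' : IsExtremalPair n S' p')
    (hlt : p.coeff (n + 1) < p'.coeff (n + 1)) : ∑ x ∈ S, x ≤ ∑ x ∈ S', x := by
  have hS := h.dividedDiff_le fun x hx ↦ h'.abs_eval_le_one x (h.subset_Icc hx)
  have hS' := h'.dividedDiff_le fun x hx ↦ h.abs_eval_le_one x (h'.subset_Icc hx)
  rw [h.dividedDiff_eval, dividedDiff_eval_of_natDegree_le_card h.card_eq h'.natDegree_le] at hS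
  rw [h'.dividedDiff_eval, dividedDiff_eval_of_natDegree_le_card h'.card_eq h.natDegree_le] at hS'
  refine le_of_mul_le_mul_left ?_ (sub_pos.2 hlt)
  linarith

end IsExtremalPair

end ExtremalPair

section Chebyshev

/-- The extrema of the Chebyshev polynomial of degree `n + 1`, without `-1`: the nodes of its
extremal pair. -/
noncomputable def chebNodes (n : ℕ) : Finset ℝ :=
  (Finset.range (n + 1)).image (Chebyshev.node (n + 1))

variable {n : ℕ}

lemma injOn_node (n : ℕ) : InjOn (Chebyshev.node n) (Finset.range (n + 1)) :=
  (Chebyshev.strictAntiOn_node n).injOn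

lemma injOn_node_succ (n : ℕ) : InjOn (Chebyshev.node (n + 1)) (Finset.range (n + 1)) :=
  (injOn_node (n + 1)).mono (Finset.coe_subset.2 (Finset.range_subset_range.2 (Nat.le_succ _)))

lemma node_reflect {i : ℕ} (hn : n ≠ 0) (hi : i ≤ n) :
    Chebyshev.node n (n - i) = -Chebyshev.node n i := by
  rw [Chebyshev.node, Chebyshev.node, ← Real.cos_pi_sub, Nat.cast_sub hi]
  field_simp

lemma sum_node (hn : n ≠ 0) : ∑ i ∈ Finset.range (n + 1), Chebyshev.node n i = 0 := by
  have hreflect := Finset.sum_range_reflect (Chebyshev.node n) (n + 1)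
  rw [Nat.add_sub_cancel, Finset.sum_congr rfl fun i hi ↦
    node_reflect hn (Nat.le_of_lt_succ (Finset.mem_range.1 hi)), Finset.sum_neg_distrib] at hreflect
  linarith

lemma sum_chebNodes (n : ℕ) : ∑ x ∈ chebNodes n, x = 1 := by
  have hsum := sum_node n.succ_ne_zero
  rw [Finset.sum_range_succ, Chebyshev.node_eq_neg_one n.succ_ne_zero] at hsum
  rw [chebNodes, Finset.sum_image (injOn_node_succ n)]
  linarith

lemma nodalWeight_image {ι F : Type*} [Field F] [DecidableEq F] [DecidableEq ι] {s : Finset ι}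
    {v : ι → F} (hv : InjOn v s) {i : ι} (hi : i ∈ s) :
    Lagrange.nodalWeight (s.image v) id (v i) = Lagrange.nodalWeight s v i := by
  have herase : (s.image v).erase (v i) = (s.erase i).image v := by
    rw [Finset.erase_eq, Finset.erase_eq, Finset.image_sdiff_of_injOn hv (by simpa using hi),
      Finset.image_singleton]
  rw [Lagrange.nodalWeight, Lagrange.nodalWeight, herase,
    Finset.prod_image (hv.mono (Finset.coe_subset.2 (Finset.erase_subset _ _)))]
  rfl

lemma neg_one_pow_mul_nodalWeight_pos {i : ℕ} (hi : i ∈ Finset.range (n + 1)) :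
    0 < (-1) ^ i * Lagrange.nodalWeight (chebNodes n) id (Chebyshev.node (n + 1) i) := by
  have hin : i < n + 1 := Finset.mem_range.1 hi
  have hlast : Chebyshev.node (n + 1) (n + 1) < Chebyshev.node (n + 1) i :=
    Chebyshev.node_lt le_rfl hin
  have hprod := Chebyshev.zero_lt_prod_node_sub_node hin.le
  rw [Finset.range_add_one (n := n + 1), Finset.erase_insert_of_ne hin.ne',
    Finset.prod_insert (by simp), mul_left_comm] at hprod
  rw [chebNodes, nodalWeight_image (injOn_node_succ n) hi, Lagrange.nodalWeight,
    Finset.prod_inv_distrib, ← inv_inv ((-1 : ℝ) ^ i), ← mul_inv, ← inv_pow, inv_neg_one]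
  exact inv_pos.2 (pos_of_mul_pos_right hprod (sub_pos.2 hlast).le)

lemma natDegree_T_natCast (n : ℕ) : (Chebyshev.T ℝ n).natDegree = n := by
  rw [Chebyshev.natDegree_T, Int.natAbs_natCast]

lemma coeff_T_succ (n : ℕ) : (Chebyshev.T ℝ (n + 1 : ℕ)).coeff (n + 1) = 2 ^ n := by
  have hlead := Chebyshev.leadingCoeff_T ℝ (n + 1 : ℕ)
  rwa [leadingCoeff, natDegree_T_natCast, Int.natAbs_natCast, Nat.add_sub_cancel] at hlead

lemma isExtremalPair_chebNodes (n : ℕ) :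
    IsExtremalPair n (chebNodes n) (Chebyshev.T ℝ (n + 1 : ℕ)) where
  card_eq := by rw [chebNodes, Finset.card_image_of_injOn (injOn_node_succ n), Finset.card_range]
  subset_Icc := by
    simp only [chebNodes, Finset.coe_image, image_subset_iff]
    exact fun i _ ↦ Chebyshev.node_mem_Icc
  natDegree_le := (natDegree_T_natCast _).le
  abs_eval_le_one x hx := Chebyshev.abs_eval_T_real_le_one _ (abs_le.2 hx)
  nodalWeight_mul_eval := by
    intro x hx
    obtain ⟨i, hi, rfl⟩ := Finset.mem_image.1 hx
    rw [Chebyshev.eval_T_real_node (Finset.mem_Iic.2 (Finset.mem_range_le hi)), mul_comm,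
      ← abs_of_pos (neg_one_pow_mul_nodalWeight_pos hi), abs_mul, abs_neg_one_pow, one_mul]

end Chebyshev

section Convexity

variable {E : Type*} [NormedAddCommGroup E] [NormedSpace ℝ E]

lemma convexHull_eq_iUnion_image_stdSimplex [FiniteDimensional ℝ E] (K : Set E) :
    convexHull ℝ K = ⋃ m ∈ Finset.range (Module.finrank ℝ E + 2),
      (fun wz : (Fin m → ℝ) × (Fin m → E) ↦ ∑ i, wz.1 i • wz.2 i) ''
        (stdSimplex ℝ (Fin m) ×ˢ univ.pi fun _ ↦ K) := by
  refine Subset.antisymm (fun x hx ↦ ?_) (iUnion₂_subset fun m _ ↦ ?_)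
  · obtain ⟨ι, _, z, w, hzK, hz, hw, hw1, rfl⟩ := eq_pos_convex_span_of_mem_convexHull hx
    let e := Fintype.equivFin ι
    have hcard : Fintype.card ι ∈ Finset.range (Module.finrank ℝ E + 2) :=
      Finset.mem_range.2 (Nat.lt_succ_of_le (hz.card_le_finrank_succ.trans
        (Nat.succ_le_succ (Submodule.finrank_le _))))
    refine mem_biUnion hcard ⟨(w ∘ e.symm, z ∘ e.symm), ⟨⟨fun i ↦ (hw _).le, ?_⟩, ?_⟩, ?_⟩
    · exact (e.symm.sum_comp w).trans hw1
    · exact fun i _ ↦ hzK (mem_range_self _)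
    · exact e.symm.sum_comp fun i ↦ w i • z i
  · rintro _ ⟨⟨w, z⟩, ⟨⟨hw, hw1⟩, hz⟩, rfl⟩
    exact (convex_convexHull ℝ K).sum_mem (fun i _ ↦ hw i) hw1
      fun i _ ↦ subset_convexHull ℝ K (hz i (mem_univ i))

lemma isCompact_convexHull [FiniteDimensional ℝ E] {K : Set E} (hK : IsCompact K) :
    IsCompact (convexHull ℝ K) := by
  rw [convexHull_eq_iUnion_image_stdSimplex]
  refine Finset.isCompact_biUnion _ fun m _ ↦ IsCompact.image ?_ (by fun_prop)
  exact (isCompact_stdSimplex ℝ (Fin m)).prod (isCompact_univ_pi fun _ ↦ hK)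

lemma exists_card_le_finrank_sum_smul_eq [FiniteDimensional ℝ E] {C : Set E} {v : E}
    (hC : (0 : E) ∉ convexHull ℝ C) (hv : (0 : E) ∈ convexHull ℝ (insert (-v) C)) :
    ∃ (t : Finset E) (w : E → ℝ), ↑t ⊆ C ∧ t.card ≤ Module.finrank ℝ E ∧ (∀ x ∈ t, 0 ≤ w x) ∧
      ∑ x ∈ t, w x • x = v := by
  classical
  rw [convexHull_eq_union] at hv
  simp only [mem_iUnion] at hv
  obtain ⟨s, hs, hindep, h0⟩ := hv
  obtain ⟨w, hw, hw1, hw0⟩ := Finset.mem_convexHull'.1 h0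
  have hvs : -v ∈ s := by
    by_contra hvs
    refine hC (convexHull_mono (fun x hx ↦ ?_) h0)
    exact (hs hx).resolve_left (ne_of_mem_of_not_mem hx hvs)
  have hsub : ↑(s.erase (-v)) ⊆ C := fun x hx ↦
    (hs (Finset.mem_of_mem_erase hx)).resolve_left (Finset.ne_of_mem_erase hx)
  rw [← Finset.add_sum_erase _ _ hvs] at hw1 hw0
  have hpos : 0 < w (-v) := by
    refine (hw _ hvs).lt_of_ne' fun hzero ↦ hC (convexHull_mono hsub ?_)
    rw [hzero, zero_add] at hw1
    rw [hzero, zero_smul, zero_add] at hw0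
    exact Finset.mem_convexHull'.2 ⟨w, fun x hx ↦ hw x (Finset.mem_of_mem_erase hx), hw1, hw0⟩
  refine ⟨s.erase (-v), fun x ↦ (w (-v))⁻¹ * w x, hsub, ?_, fun x hx ↦
    mul_nonneg (inv_nonneg.2 hpos.le) (hw x (Finset.mem_of_mem_erase hx)), ?_⟩
  · have hcard := hindep.card_le_finrank_succ
    rw [Fintype.card_coe] at hcard
    rw [Finset.card_erase_of_mem hvs, Nat.sub_le_iff_le_add]
    exact hcard.trans (Nat.succ_le_succ (Submodule.finrank_le _))
  · rw [smul_neg, neg_add_eq_zero] at hw0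
    simp only [mul_smul]
    rw [← Finset.smul_sum, ← hw0, inv_smul_smul₀ hpos.ne']

end Convexity

section Optimization

open scoped Topology in
lemma exists_pos_forall_abs_add_le_one {X : Type*} [TopologicalSpace X] {K : Set X}
    (hK : IsCompact K) {f g : X → ℝ} (hf : Continuous f) (hg : Continuous g)
    (hf1 : ∀ x ∈ K, |f x| ≤ 1) (hfg : ∀ x ∈ K, |f x| = 1 → f x * g x < 0) :
    ∃ ε > 0, ∀ x ∈ K, |f x + ε * g x| ≤ 1 := by
  have hlocal : ∀ x ∈ K, ∀ᶠ z : ℝ × X in 𝓝 (0, x),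
      0 < z.1 → z.2 ∈ K → |f z.2 + z.1 * g z.2| ≤ 1 := by
    intro x hx
    rcases (hf1 x hx).lt_or_eq with hlt | heq
    · have hcont : Continuous fun z : ℝ × X ↦ |f z.2 + z.1 * g z.2| := by fun_prop
      filter_upwards [hcont.continuousAt.eventually_lt continuousAt_const (by simpa using hlt)]
        with z hz _ _ using hz.le
    · have hcont : Continuous fun z : ℝ × X ↦ 2 * (f z.2 * g z.2) + z.1 * g z.2 ^ 2 := by fun_prop
      have hneg := hfg x hx heq
      filter_upwards [hcont.continuousAt.eventually_lt continuousAt_const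
        (show 2 * (f x * g x) + 0 * g x ^ 2 < 0 by linarith)] with z hz hε hzK
      have hsq : f z.2 ^ 2 ≤ 1 := (sq_le_one_iff_abs_le_one _).2 (hf1 z.2 hzK)
      rw [← sq_le_one_iff_abs_le_one]
      linear_combination hsq + z.1 * hz.le
  have huniform := hK.eventually_forall_of_forall_eventually
    (P := fun ε x ↦ 0 < ε → x ∈ K → |f x + ε * g x| ≤ 1) hlocal
  obtain ⟨ε, hε, hpos⟩ :=
    ((huniform.filter_mono nhdsWithin_le_nhds).and (self_mem_nhdsWithin (s := Ioi 0))).exists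
  exact ⟨ε, hpos, fun x hx ↦ hε x hx hpos hx⟩

lemma exists_polynomial_maximizing_linearMap {K : Set ℝ} (hK : K.Infinite) {N : ℕ}
    (φ ψ : ℝ[X] →ₗ[ℝ] ℝ) {p₀ : ℝ[X]} (hdeg₀ : p₀.natDegree ≤ N) (hK₀ : ∀ x ∈ K, |p₀.eval x| ≤ 1) :
    ∃ p : ℝ[X], p.natDegree ≤ N ∧ (∀ x ∈ K, |p.eval x| ≤ 1) ∧ φ p = φ p₀ ∧
      ∀ q : ℝ[X], q.natDegree ≤ N → (∀ x ∈ K, |q.eval x| ≤ 1) → φ q = φ p₀ → ψ q ≤ ψ p := by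
  obtain ⟨s, hsK, hs⟩ := hK.exists_subset_card_eq (N + 1)
  let I : (s → ℝ) →ₗ[ℝ] ℝ[X] := Lagrange.interpolate Finset.univ Subtype.val
  have hinj : InjOn (Subtype.val : s → ℝ) (Finset.univ : Finset s) := Subtype.val_injective.injOn
  have hcard : (Finset.univ : Finset s).card = N + 1 := by
    rw [Finset.card_univ, Fintype.card_coe, hs]
  have hI : ∀ q : ℝ[X], q.natDegree ≤ N → I (fun x ↦ q.eval ↑x) = q := fun q hq ↦ by
    refine (Lagrange.eq_interpolate hinj ?_).symm
    rw [hcard]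
    exact (degree_le_of_natDegree_le hq).trans_lt (by exact_mod_cast N.lt_succ_self)
  have hIdeg : ∀ v, (I v).natDegree ≤ N := fun v ↦
    natDegree_le_of_degree_le ((Lagrange.degree_interpolate_le v hinj).trans_eq
      (by rw [hcard, Nat.add_sub_cancel]))
  have hcont : ∀ χ : ℝ[X] →ₗ[ℝ] ℝ, Continuous fun v ↦ χ (I v) := fun χ ↦
    (χ ∘ₗ I).continuous_of_finiteDimensional
  let A : Set (s → ℝ) := (univ.pi fun _ ↦ Icc (-1) 1) ∩
    ({v | ∀ x ∈ K, |(I v).eval x| ≤ 1} ∩ {v | φ (I v) = φ p₀})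
  have hA : IsCompact A := by
    refine (isCompact_univ_pi fun _ ↦ isCompact_Icc).inter_right
      (IsClosed.inter ?_ (isClosed_eq (hcont φ) continuous_const))
    simp only [ofPred_forall]
    exact isClosed_biInter fun x _ ↦ isClosed_le (hcont (leval x)).abs continuous_const
  have hmem : ∀ q : ℝ[X], q.natDegree ≤ N → (∀ x ∈ K, |q.eval x| ≤ 1) → φ q = φ p₀ →
      (fun x : s ↦ q.eval ↑x) ∈ A := fun q hdeg hqK hφ ↦
    ⟨fun x _ ↦ abs_le.1 (hqK x (hsK x.2)), by simpa only [mem_ofPred_eq, hI q hdeg],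
      by simpa only [mem_ofPred_eq, hI q hdeg]⟩
  obtain ⟨v, ⟨-, hvK, hvφ⟩, hmax⟩ := hA.exists_isMaxOn ⟨_, hmem p₀ hdeg₀ hK₀ rfl⟩
    (hcont ψ).continuousOn
  refine ⟨I v, hIdeg v, hvK, hvφ, fun q hdeg hqK hφ ↦ ?_⟩
  simpa only [hI q hdeg] using isMaxOn_iff.1 hmax _ (hmem q hdeg hqK hφ)

lemma exists_natDegree_le_forall_sum_pos {n : ℕ} {C : Set (Fin (n + 1) → ℝ)} (hC : IsCompact C)
    (h0 : 0 ∉ convexHull ℝ C) :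
    ∃ q : ℝ[X], q.natDegree ≤ n ∧ ∀ v ∈ C, 0 < ∑ i, v i * q.coeff i := by
  obtain ⟨ℓ, u, hu, hℓ⟩ := geometric_hahn_banach_point_closed (convex_convexHull ℝ C)
    (isCompact_convexHull hC).isClosed h0
  rw [map_zero] at hu
  refine ⟨ofFn (n + 1) fun i ↦ ℓ (Pi.single i 1), ?_, fun v hv ↦ ?_⟩
  · exact Nat.le_of_lt_succ (ofFn_natDegree_lt n.succ_pos _)
  · have hcoord : ℓ v = ∑ i, v i * ℓ (Pi.single i 1) := by
      conv_lhs => rw [pi_eq_sum_univ' v]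
      simp [map_sum, map_smul]
    simp only [ofFn_coeff_eq_val_of_lt _ (Fin.is_lt _), Fin.eta]
    rw [← hcoord]
    exact hu.trans (hℓ v (subset_convexHull ℝ C hv))

end Optimization

section ExistsExtremalPair

/-- The points of `[-1, 1]` at which `p` takes one of the values `±1`, among which the nodes of an
extremal pair are found. -/
def contactSet (p : ℝ[X]) : Set ℝ := Icc (-1) 1 ∩ {x | |p.eval x| = 1}

/-- The functional `q ↦ p x * q x` on polynomials `q` of degree at most `n`, as a vector of
coefficients. Kolmogorov's criterion for `p` writes `q ↦ q.coeff n` as a conic combination of such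
functionals at contact points. -/
def signedMoment (n : ℕ) (p : ℝ[X]) (x : ℝ) : Fin (n + 1) → ℝ := fun i ↦ p.eval x * x ^ (i : ℕ)

/-- Among the polynomials of degree at most `n + 1` bounded by `1` on `[-1, 1]` which have the same
coefficient of `X ^ (n + 1)`, `p` has the largest coefficient of `X ^ n`. -/
structure HasMaximalCoeff (n : ℕ) (p : ℝ[X]) : Prop where
  natDegree_le : p.natDegree ≤ n + 1
  abs_eval_le_one : ∀ x ∈ Icc (-1 : ℝ) 1, |p.eval x| ≤ 1
  coeff_le : ∀ q : ℝ[X], q.natDegree ≤ n + 1 → (∀ x ∈ Icc (-1 : ℝ) 1, |q.eval x| ≤ 1) →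
    q.coeff (n + 1) = p.coeff (n + 1) → q.coeff n ≤ p.coeff n

variable {n : ℕ} {p q : ℝ[X]}

lemma isCompact_contactSet (p : ℝ[X]) : IsCompact (contactSet p) :=
  isCompact_Icc.inter_right (isClosed_eq p.continuous.abs continuous_const)

lemma continuous_signedMoment (n : ℕ) (p : ℝ[X]) : Continuous (signedMoment n p) := by
  unfold signedMoment
  fun_prop

lemma sum_mul_coeff_signedMoment (p : ℝ[X]) (hq : q.natDegree ≤ n) (x : ℝ) :
    ∑ i, signedMoment n p x i * q.coeff i = p.eval x * q.eval x := by
  rw [eval_eq_sum_range' (Nat.lt_succ_of_le hq), Finset.mul_sum, ← Fin.sum_univ_eq_sum_range]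
  refine Finset.sum_congr rfl fun i _ ↦ ?_
  rw [signedMoment]
  ring

lemma zero_notMem_convexHull_signedMoment (hq : q.natDegree ≤ n)
    (hpos : ∀ x ∈ contactSet p, 0 < p.eval x * q.eval x) :
    0 ∉ convexHull ℝ (signedMoment n p '' contactSet p) := by
  have hconvex : Convex ℝ {v : Fin (n + 1) → ℝ | 0 < ∑ i, v i * q.coeff i} :=
    convex_halfSpace_gt (Fintype.linearCombination ℝ fun i : Fin (n + 1) ↦ q.coeff i).isLinear 0
  intro h0
  have := convexHull_min (image_subset_iff.2 fun x hx ↦ ?_) hconvex h0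
  · simp at this
  · rw [mem_preimage, mem_ofPred_eq, sum_mul_coeff_signedMoment p hq]
    exact hpos x hx

lemma exists_pos_eval_mul_eval_on_contactSet (hdeg : p.natDegree ≤ n + 1)
    (hlead : |p.coeff (n + 1)| < 2 ^ n) :
    ∃ q : ℝ[X], q.natDegree ≤ n ∧ ∀ x ∈ contactSet p, 0 < p.eval x * q.eval x := by
  set c := p.coeff (n + 1) / 2 ^ n with hc
  have hc1 : |c| < 1 := by
    rw [hc, abs_div, abs_of_pos (by positivity : (0 : ℝ) < 2 ^ n)]
    exact (div_lt_one (by positivity)).2 hlead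
  refine ⟨p - C c * Chebyshev.T ℝ (n + 1 : ℕ), ?_, fun x ⟨hx, hpx⟩ ↦ ?_⟩
  · refine natDegree_le_pred (n := n + 1)
      ((natDegree_sub_le_of_le hdeg ?_).trans_eq (max_self _)) ?_
    · exact (natDegree_C_mul_le _ _).trans (natDegree_T_natCast _).le
    · rw [coeff_sub, coeff_C_mul, coeff_T_succ, hc, div_mul_cancel₀ _ (by positivity), sub_self]
  · have hT : |c * (p.eval x * (Chebyshev.T ℝ (n + 1 : ℕ)).eval x)| < 1 := by
      rw [abs_mul, abs_mul, hpx, one_mul]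
      exact (mul_le_of_le_one_right (abs_nonneg _)
        (Chebyshev.abs_eval_T_real_le_one _ (abs_le.2 hx))).trans_lt hc1
    have hsq : p.eval x ^ 2 = 1 := by rw [← sq_abs, hpx, one_pow]
    rw [eval_sub, eval_mul, eval_C]
    linear_combination (lt_of_abs_lt hT) - hsq

lemma not_forall_eval_mul_eval_pos_of_coeff_neg (hp : HasMaximalCoeff n p)
    (hq : q.natDegree ≤ n) (hqn : q.coeff n < 0) :
    ¬∀ x ∈ contactSet p, 0 < p.eval x * q.eval x := by
  intro hpos
  obtain ⟨ε, hε, hbound⟩ := exists_pos_forall_abs_add_le_one isCompact_Icc p.continuous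
    (-q).continuous hp.abs_eval_le_one fun x hx hpx ↦ by
      rw [eval_neg, mul_neg, neg_lt_zero]
      exact hpos x ⟨hx, hpx⟩
  have hle := hp.coeff_le (p + C ε * -q) ?_ (by simpa using hbound) ?_
  · rw [coeff_add, coeff_C_mul, coeff_neg] at hle
    have := mul_neg_of_pos_of_neg hε hqn
    linarith
  · refine (natDegree_add_le_of_le hp.natDegree_le
      ((natDegree_C_mul_le _ _).trans ?_)).trans_eq (max_self _)
    rw [natDegree_neg]
    exact hq.trans n.le_succ
  · rw [coeff_add, coeff_C_mul, coeff_neg, coeff_eq_zero_of_natDegree_lt (Nat.lt_succ_of_le hq),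
      neg_zero, mul_zero, add_zero]

lemma zero_mem_convexHull_insert_signedMoment (hp : HasMaximalCoeff n p) :
    0 ∈ convexHull ℝ
      (insert (-Pi.single (Fin.last n) 1) (signedMoment n p '' contactSet p)) := by
  by_contra h0
  have hcompact := (isCompact_contactSet p).image (continuous_signedMoment n p)
  obtain ⟨q, hq, hpos⟩ := exists_natDegree_le_forall_sum_pos
    (hcompact.insert (-Pi.single (Fin.last n) 1)) h0
  have hqn := hpos _ (mem_insert _ _)
  simp only [Pi.neg_apply, neg_mul, Finset.sum_neg_distrib, Pi.single_apply, ite_mul, one_mul,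
    zero_mul, Finset.sum_ite_eq', Finset.mem_univ, if_true, Fin.val_last, Left.neg_pos_iff] at hqn
  refine not_forall_eval_mul_eval_pos_of_coeff_neg hp hq hqn fun x hx ↦ ?_
  rw [← sum_mul_coeff_signedMoment p hq]
  exact hpos _ (mem_insert_of_mem _ (mem_image_of_mem _ hx))

lemma isExtremalPair_of_sum_smul_signedMoment (hdeg : p.natDegree ≤ n + 1)
    (hp : ∀ x ∈ Icc (-1 : ℝ) 1, |p.eval x| ≤ 1) {S : Finset ℝ} (hS : ↑S ⊆ contactSet p)
    (hcard : S.card ≤ n + 1) {c : ℝ → ℝ} (hc : ∀ x ∈ S, 0 ≤ c x)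
    (hsum : ∑ x ∈ S, c x • signedMoment n p x = Pi.single (Fin.last n) 1) :
    IsExtremalPair n S p := by
  have hrepr : ∀ q : ℝ[X], q.natDegree ≤ n →
      ∑ x ∈ S, c x * p.eval x * q.eval x = q.coeff n := fun q hq ↦ calc
    _ = ∑ i, (∑ x ∈ S, c x • signedMoment n p x) i * q.coeff i := by
      simp only [Finset.sum_apply, Finset.sum_mul, Pi.smul_apply, smul_eq_mul, mul_assoc]
      rw [Finset.sum_comm]
      simp only [← Finset.mul_sum, sum_mul_coeff_signedMoment p hq]
    _ = q.coeff n := by rw [hsum]; simp [Pi.single_apply]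
  have hcard := card_eq_of_sum_mul_eval_eq_coeff hcard hrepr
  refine ⟨hcard, hS.trans inter_subset_left, hdeg, hp, fun x hx ↦ ?_⟩
  have hsq : p.eval x * p.eval x = 1 := by
    rw [← abs_mul_abs_self, (hS hx).2, one_mul]
  rw [← eq_nodalWeight_of_sum_mul_eval_eq_coeff hcard hrepr hx, abs_mul, (hS hx).2, mul_one,
    abs_of_nonneg (hc x hx), mul_assoc, hsq, mul_one]

lemma exists_isExtremalPair_of_hasMaximalCoeff (hp : HasMaximalCoeff n p)
    (hlead : |p.coeff (n + 1)| < 2 ^ n) :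
    ∃ S, IsExtremalPair n S p := by
  obtain ⟨q, hq, hpos⟩ := exists_pos_eval_mul_eval_on_contactSet hp.natDegree_le hlead
  obtain ⟨t, w, ht, hcard, hw, hsum⟩ := exists_card_le_finrank_sum_smul_eq
    (zero_notMem_convexHull_signedMoment hq hpos)
    (zero_mem_convexHull_insert_signedMoment hp)
  obtain ⟨S, hS, hinj, rfl⟩ := Finset.exists_subset_injOn_image_eq_of_surjOn _ t ht
  rw [Finset.sum_image hinj] at hsum
  rw [Finset.card_image_of_injOn hinj, Module.finrank_fin_fun] at hcard
  exact ⟨S, isExtremalPair_of_sum_smul_signedMoment hp.natDegree_le hp.abs_eval_le_one hS hcard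
    (fun x hx ↦ hw _ (Finset.mem_image_of_mem _ hx)) hsum⟩

theorem exists_isExtremalPair_of_abs_lt {a : ℝ} (ha : |a| < 2 ^ n) :
    ∃ S p, IsExtremalPair n S p ∧ p.coeff (n + 1) = a := by
  have hT := isExtremalPair_chebNodes n
  have hc : |a / 2 ^ n| ≤ 1 := by
    rw [abs_div, abs_of_pos (by positivity : (0 : ℝ) < 2 ^ n)]
    exact (div_lt_one (by positivity)).2 ha |>.le
  have hcoeff : (C (a / 2 ^ n) * Chebyshev.T ℝ (n + 1 : ℕ)).coeff (n + 1) = a := by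
    rw [coeff_C_mul, coeff_T_succ, div_mul_cancel₀ _ (by positivity)]
  obtain ⟨p, hdeg, hp, hpa, hmax⟩ := exists_polynomial_maximizing_linearMap
    (Icc_infinite (by norm_num : (-1 : ℝ) < 1)) (lcoeff ℝ (n + 1)) (lcoeff ℝ n)
    ((natDegree_C_mul_le _ _).trans hT.natDegree_le)
    (fun x hx ↦ by
      rw [eval_mul, eval_C, abs_mul]
      exact mul_le_one₀ hc (abs_nonneg _) (hT.abs_eval_le_one x hx))
  simp only [lcoeff_apply, hcoeff] at hpa hmax
  obtain ⟨S, hS⟩ := exists_isExtremalPair_of_hasMaximalCoeff ⟨hdeg, hp, hpa ▸ hmax⟩ (hpa ▸ ha)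
  exact ⟨S, p, hS, hpa⟩

theorem exists_isExtremalPair_sum_le_one {a : ℝ} (ha0 : 0 ≤ a) (ha : a ≤ 2 ^ n) :
    ∃ S p, IsExtremalPair n S p ∧ p.coeff (n + 1) = a ∧ ∑ x ∈ S, x ≤ 1 := by
  have hT := isExtremalPair_chebNodes n
  rcases ha.lt_or_eq with hlt | rfl
  · obtain ⟨S, p, hS, hpa⟩ := exists_isExtremalPair_of_abs_lt (abs_of_nonneg ha0 ▸ hlt)
    refine ⟨S, p, hS, hpa, (hS.sum_le_sum hT ?_).trans_eq (sum_chebNodes n)⟩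
    rwa [hpa, coeff_T_succ]
  · exact ⟨_, _, hT, coeff_T_succ n, (sum_chebNodes n).le⟩

end ExistsExtremalPair

section MeanValue

variable {n : ℕ} {f : ℝ → ℝ} {s t : Set ℝ} {S Z : Finset ℝ}

lemma exists_finset_derivWithin_eq_zero (hf : DifferentiableOn ℝ f s) (ht : t.OrdConnected)
    (hts : t ⊆ s) (hZ : Z.card = n + 1) (hZt : ↑Z ⊆ t) (hf0 : ∀ x ∈ Z, f x = 0) :
    ∃ Z' : Finset ℝ, Z'.card = n ∧ ↑Z' ⊆ t ∧ ∀ x ∈ Z', derivWithin f s x = 0 := by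
  let e := Z.orderEmbOfFin hZ
  have he : ∀ i, e i ∈ Z := Z.orderEmbOfFin_mem hZ
  have hrolle : ∀ i : Fin n, ∃ z ∈ Ioo (e i.castSucc) (e i.succ), derivWithin f s z = 0 := by
    intro i
    have hsub : Icc (e i.castSucc) (e i.succ) ⊆ s := (ht.out (hZt (he _)) (hZt (he _))).trans hts
    obtain ⟨z, hz, hfz⟩ := exists_deriv_eq_zero (e.strictMono Fin.castSucc_lt_succ)
      (hf.continuousOn.mono hsub) ((hf0 _ (he _)).trans (hf0 _ (he _)).symm)
    refine ⟨z, hz, ?_⟩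
    rwa [derivWithin_of_mem_nhds (Filter.mem_of_superset (Icc_mem_nhds hz.1 hz.2) hsub)]
  choose z hz hfz using hrolle
  have hz_mono : StrictMono z := fun i j hij ↦
    ((hz i).2.trans_le (e.monotone (Fin.succ_le_castSucc_iff.2 hij))).trans (hz j).1
  refine ⟨Finset.univ.image z, ?_, ?_, ?_⟩
  · rw [Finset.card_image_of_injective _ hz_mono.injective, Finset.card_univ, Fintype.card_fin]
  · simp only [Finset.coe_image, Finset.coe_univ, image_univ, range_subset_iff]
    exact fun i ↦ ht.out (hZt (he _)) (hZt (he _)) (Ioo_subset_Icc_self (hz i))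
  · simpa using hfz

lemma exists_iteratedDerivWithin_eq_zero (hf : NTimesDiffOn n f s) (ht : t.OrdConnected)
    (hts : t ⊆ s) (hZ : Z.card = n + 1) (hZt : ↑Z ⊆ t) (hf0 : ∀ x ∈ Z, f x = 0) :
    ∃ ξ ∈ t, iteratedDerivWithin n f s ξ = 0 := by
  have hzeros : ∀ k ≤ n, ∃ Z' : Finset ℝ, Z'.card = n - k + 1 ∧ ↑Z' ⊆ t ∧
      ∀ x ∈ Z', iteratedDerivWithin k f s x = 0 := by
    intro k hk
    induction k with
    | zero => exact ⟨Z, hZ, hZt, by simpa using hf0⟩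
    | succ k ih =>
      obtain ⟨Z', hcard, hZ't, hZ'0⟩ := ih (by lia)
      rw [iteratedDerivWithin_succ]
      exact exists_finset_derivWithin_eq_zero (hf k hk) ht hts (by lia) hZ't hZ'0
  obtain ⟨Z', hcard, hZ't, hZ'0⟩ := hzeros n le_rfl
  obtain ⟨ξ, hξ⟩ := Finset.card_pos.1 (by lia : 0 < Z'.card)
  exact ⟨ξ, hZ't hξ, hZ'0 ξ hξ⟩

lemma iteratedDerivWithin_add_eval (hs : UniqueDiffOn ℝ s) (hf : NTimesDiffOn n f s) (P : ℝ[X])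
    {k : ℕ} (hk : k ≤ n) :
    EqOn (iteratedDerivWithin k (fun x ↦ f x + P.eval x) s)
      (fun x ↦ iteratedDerivWithin k f s x + (derivative^[k] P).eval x) s := by
  induction k with
  | zero => simpa using eqOn_refl _ _
  | succ k ih =>
    intro x hx
    have ih := ih (Nat.le_of_succ_le hk)
    beta_reduce
    rw [iteratedDerivWithin_succ, derivWithin_congr ih (ih hx),
      derivWithin_fun_add (hf k hk x hx) (Polynomial.differentiableWithinAt _),
      Polynomial.derivWithin _ (hs x hx), iteratedDerivWithin_succ, Function.iterate_succ_apply']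

lemma nTimesDiffOn_add_eval (hs : UniqueDiffOn ℝ s) (hf : NTimesDiffOn n f s) (P : ℝ[X]) :
    NTimesDiffOn n (fun x ↦ f x + P.eval x) s := fun i hi ↦
  ((hf i hi).add (Polynomial.differentiableOn _)).congr
    (iteratedDerivWithin_add_eval hs hf P hi.le)

lemma nTimesDiffOn_zero (n : ℕ) (s : Set ℝ) : NTimesDiffOn n (fun _ ↦ 0) s := fun _ _ ↦
  (differentiableOn_const 0).congr fun _ _ ↦ iteratedDerivWithin_fun_const_zero

lemma iteratedDerivWithin_eval (hs : UniqueDiffOn ℝ s) (P : ℝ[X]) (n : ℕ) :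
    EqOn (iteratedDerivWithin n (fun x ↦ P.eval x) s) (fun x ↦ (derivative^[n] P).eval x) s := by
  simpa using iteratedDerivWithin_add_eval hs (nTimesDiffOn_zero n s) P le_rfl

lemma nTimesDiffOn_eval (hs : UniqueDiffOn ℝ s) (P : ℝ[X]) (n : ℕ) :
    NTimesDiffOn n (fun x ↦ P.eval x) s := by
  simpa using nTimesDiffOn_add_eval hs (nTimesDiffOn_zero n s) P

lemma eval_iterate_derivative_eq_sum_range {R : Type*} [CommSemiring R] {P : R[X]} {n m : ℕ}
    (hm : m ≠ 0) (hP : P.natDegree < n + m) (x : R) :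
    (derivative^[n] P).eval x =
      n.factorial * ∑ i ∈ Finset.range m, (i + n).choose n * P.coeff (i + n) * x ^ i := by
  have hdeg : (derivative^[n] P).natDegree < m :=
    (natDegree_iterate_derivative P n).trans_lt (by lia)
  rw [eval_eq_sum_range' hdeg, Finset.mul_sum]
  refine Finset.sum_congr rfl fun i _ ↦ ?_
  rw [coeff_iterate_derivative, Nat.descFactorial_eq_factorial_mul_choose, nsmul_eq_mul,
    Nat.cast_mul, mul_assoc, mul_assoc, mul_assoc]

lemma exists_iteratedDerivWithin_eq_factorial_mul_dividedDiff (hs : UniqueDiffOn ℝ s)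
    (hf : NTimesDiffOn n f s) (ht : t.OrdConnected) (hts : t ⊆ s) (hS : S.card = n + 1)
    (hSt : ↑S ⊆ t) :
    ∃ ξ ∈ t, iteratedDerivWithin n f s ξ = n.factorial * dividedDiff S f := by
  have hinj : InjOn id (S : Set ℝ) := injOn_id _
  set L := Lagrange.interpolate S id f
  have hLS : ∀ x ∈ S, L.eval x = f x := fun x ↦ Lagrange.eval_interpolate_at_node f hinj
  have hLdeg : L.degree < S.card := Lagrange.degree_interpolate_lt f hinj
  have hLn : L.natDegree < n + 1 :=
    Nat.lt_succ_of_le (natDegree_le_of_degree_le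
      ((Lagrange.degree_interpolate_le f hinj).trans_eq (by rw [hS, Nat.add_sub_cancel])))
  have hdd : dividedDiff S f = L.coeff n := by
    rw [← Nat.add_sub_cancel n 1, ← hS, ← dividedDiff_eval_of_degree_lt hLdeg, dividedDiff_apply,
      dividedDiff_apply]
    exact Finset.sum_congr rfl fun x hx ↦ by rw [hLS x hx]
  obtain ⟨ξ, hξ, hξ0⟩ := exists_iteratedDerivWithin_eq_zero (nTimesDiffOn_add_eval hs hf (-L)) ht
    hts hS hSt fun x hx ↦ by rw [eval_neg, hLS x hx, add_neg_cancel]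
  refine ⟨ξ, hξ, ?_⟩
  rw [iteratedDerivWithin_add_eval hs hf (-L) le_rfl (hts hξ)] at hξ0
  rw [hdd, eq_neg_of_add_eq_zero_left hξ0, iterate_derivative_neg, eval_neg, neg_neg,
    eval_iterate_derivative_eq_sum_range one_ne_zero hLn]
  simp

end MeanValue

section UpperBound

variable {n : ℕ} {f : ℝ → ℝ} {s t : Set ℝ} {S : Finset ℝ} {σ x₀ : ℝ}

lemma iteratedDerivWithin_le_of_abs_sub_le_eval (hs : Convex ℝ s) (hs' : UniqueDiffOn ℝ s)
    (hf : NTimesDiffOn (n + 1) f s) (hσ : ∀ x ∈ s, |iteratedDerivWithin (n + 1) f s x| ≤ σ)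
    (ht : t.OrdConnected) (hts : t ⊆ s) (hS : S.card = n + 1) (hSt : ↑S ⊆ t) (hx₀ : x₀ ∈ s)
    {Q : ℝ[X]} (hQ : ∀ y ∈ t, |x₀ - y| ≤ (derivative^[n] Q).eval y) :
    iteratedDerivWithin n f s x₀ ≤
      n.factorial * dividedDiff S f + σ * (n.factorial * dividedDiff S fun x ↦ Q.eval x) := by
  have hσ0 : 0 ≤ σ := (abs_nonneg _).trans (hσ x₀ hx₀)
  have hfn : NTimesDiffOn n f s := fun i hi ↦ hf i (Nat.lt_succ_of_lt hi)
  obtain ⟨ξ, hξ, hmean⟩ := exists_iteratedDerivWithin_eq_factorial_mul_dividedDiff hs'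
    (nTimesDiffOn_add_eval hs' hfn (C σ * Q)) ht hts hS hSt
  have hsplit : (fun x ↦ f x + (C σ * Q).eval x) = f + σ • fun x ↦ Q.eval x := by
    ext x
    simp
  rw [iteratedDerivWithin_add_eval hs' hfn _ le_rfl (hts hξ), hsplit, map_add, map_smul] at hmean
  simp only [iterate_derivative_C_mul, eval_mul, eval_C, smul_eq_mul] at hmean
  have hlip : |iteratedDerivWithin n f s x₀ - iteratedDerivWithin n f s ξ| ≤ σ * |x₀ - ξ| :=
    hs.norm_image_sub_le_of_norm_derivWithin_le (hf n n.lt_succ_self)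
      (fun x hx ↦ iteratedDerivWithin_succ (f := f) ▸ hσ x hx) (hts hξ) hx₀
  calc iteratedDerivWithin n f s x₀
      ≤ iteratedDerivWithin n f s ξ + σ * |x₀ - ξ| := by linarith [le_of_abs_le hlip]
    _ ≤ iteratedDerivWithin n f s ξ + σ * (derivative^[n] Q).eval ξ := by gcongr; exact hQ ξ hξ
    _ = _ := by linear_combination hmean

/-- The `n`-fold antiderivative of `α + β X + γ X ^ 2` without terms of degree less than `n`, used
with a majorant of `|x₀ - y|` as its `n`-th derivative. -/
noncomputable def quadraticAntideriv (n : ℕ) (α β γ : ℝ) : ℝ[X] :=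
  C (n.factorial : ℝ)⁻¹ * (C α * X ^ n + C (β / (n + 1)) * X ^ (n + 1) +
    C (2 * γ / ((n + 1) * (n + 2))) * X ^ (n + 2))

lemma eval_iterate_derivative_quadraticAntideriv (n : ℕ) (α β γ y : ℝ) :
    (derivative^[n] (quadraticAntideriv n α β γ)).eval y = α + β * y + γ * y ^ 2 := by
  have hchoose : ((n + 2).choose n : ℝ) = (n + 2) * (n + 1) / 2 := by
    rw [Nat.choose_symm_add, Nat.cast_choose_two]
    push_cast
    ring
  have := n.factorial_ne_zero
  simp only [quadraticAntideriv, iterate_derivative_C_mul, iterate_map_add,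
    iterate_derivative_X_pow_eq_C_mul, Nat.descFactorial_eq_factorial_mul_choose, Nat.choose_self,
    Nat.choose_succ_self_right, Nat.cast_mul, hchoose, eval_mul, eval_add, eval_C, eval_pow, eval_X,
    Nat.sub_self, Nat.add_sub_cancel_left]
  push_cast
  field_simp

lemma factorial_mul_dividedDiff_quadraticAntideriv (hS : S.card = n + 1) (α β γ : ℝ) :
    n.factorial * dividedDiff S (fun x ↦ (quadraticAntideriv n α β γ).eval x) =
      α + β * (∑ x ∈ S, x) / (n + 1) +
        γ * ((∑ x ∈ S, x) ^ 2 + ∑ x ∈ S, x ^ 2) / ((n + 1) * (n + 2)) := by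
  have heval : (fun x ↦ (quadraticAntideriv n α β γ).eval x) =
      (n.factorial : ℝ)⁻¹ • (α • (fun x ↦ x ^ n) + (β / (n + 1)) • (fun x ↦ x ^ (n + 1)) +
        (2 * γ / ((n + 1) * (n + 2))) • fun x ↦ x ^ (n + 2)) := by
    ext x
    simp [quadraticAntideriv]
  have hpow := dividedDiff_pow_card S
  have hpow' := two_mul_dividedDiff_pow_card_succ S
  rw [hS] at hpow hpow'
  simp only [heval, map_smul, map_add, smul_eq_mul, hpow, dividedDiff_pow_of_lt_card
    (hS.symm ▸ n.lt_succ_self : n < S.card), if_pos hS, ← hpow']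
  have := n.factorial_ne_zero
  field_simp

lemma iteratedDerivWithin_le_of_abs_sub_le_quadratic (hs : Convex ℝ s) (hs' : UniqueDiffOn ℝ s)
    (hf : NTimesDiffOn (n + 1) f s) (hσ : ∀ x ∈ s, |iteratedDerivWithin (n + 1) f s x| ≤ σ)
    (ht : t.OrdConnected) (hts : t ⊆ s) (hS : S.card = n + 1) (hSt : ↑S ⊆ t) (hx₀ : x₀ ∈ s)
    {α β γ c : ℝ} (hquad : ∀ y ∈ t, |x₀ - y| ≤ α + β * y + γ * y ^ 2)
    (hc : α + β * (∑ x ∈ S, x) / (n + 1) +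
      γ * ((∑ x ∈ S, x) ^ 2 + ∑ x ∈ S, x ^ 2) / ((n + 1) * (n + 2)) ≤ c) :
    iteratedDerivWithin n f s x₀ ≤ n.factorial * dividedDiff S f + σ * c := by
  have hσ0 : 0 ≤ σ := (abs_nonneg _).trans (hσ x₀ hx₀)
  have hle := iteratedDerivWithin_le_of_abs_sub_le_eval hs hs' hf hσ ht hts hS hSt hx₀
    (Q := quadraticAntideriv n α β γ)
    fun y hy ↦ (hquad y hy).trans_eq (eval_iterate_derivative_quadraticAntideriv n α β γ y).symm
  rw [factorial_mul_dividedDiff_quadraticAntideriv hS] at hle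
  exact hle.trans (by gcongr)

lemma sq_sum_add_sum_sq_add_le (hn : 2 ≤ n) (hS : S.card = n + 1) (hSI : ↑S ⊆ Icc (-1 : ℝ) 1)
    (hsum : ∑ x ∈ S, x ≤ 1) :
    (∑ x ∈ S, x) ^ 2 + ∑ x ∈ S, x ^ 2 + 2 * (n + 2) * ∑ x ∈ S, x ≤ (n + 1) * (n + 2) := by
  have hsq : ∑ x ∈ S, x ^ 2 ≤ n + 1 := by
    simpa [hS] using Finset.sum_le_card_nsmul S (fun x ↦ x ^ 2) 1
      fun x hx ↦ (sq_le_one_iff_abs_le_one x).2 (abs_le.2 (hSI hx))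
  have hlow : -(n + 1) ≤ ∑ x ∈ S, x := by
    simpa [hS] using Finset.card_nsmul_le_sum S id (-1) fun x hx ↦ (hSI hx).1
  have hn' : (2 : ℝ) ≤ n := by exact_mod_cast hn
  have hmul : 0 ≤ (1 - ∑ x ∈ S, x) * (∑ x ∈ S, x + (2 * n + 5)) :=
    mul_nonneg (by linarith) (by linarith)
  linear_combination hsq + hmul + (n + 2) * hn'

lemma abs_sub_le_quadratic (hx₀ : x₀ ∈ Icc 0 1) {y : ℝ} (hy : y ≤ 1) :
    |x₀ - y| ≤ (1 + x₀) / 2 + -x₀ * y + (1 - x₀) / 2 * y ^ 2 := by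
  obtain ⟨h0, h1⟩ := hx₀
  have habs : |y| ≤ (1 + y ^ 2) / 2 := by
    rw [← sq_abs]
    linear_combination sq_nonneg (1 - |y|) / 2
  calc |x₀ - y| = |(1 - x₀) * -y + x₀ * (1 - y)| := by
        congr 1
        ring
    _ ≤ (1 - x₀) * |y| + x₀ * (1 - y) := by
        refine (abs_add_le _ _).trans_eq ?_
        rw [abs_mul, abs_mul, abs_neg, abs_of_nonneg h0, abs_of_nonneg (sub_nonneg.2 h1),
          abs_of_nonneg (sub_nonneg.2 hy)]
    _ ≤ (1 - x₀) * ((1 + y ^ 2) / 2) + x₀ * (1 - y) := by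
        gcongr
    _ = _ := by ring

lemma iteratedDerivWithin_le_of_two_le (hn : 2 ≤ n) (hf : NTimesDiffOn (n + 1) f (Icc (-1) 1))
    (hσ : ∀ x ∈ Icc (-1) 1, |iteratedDerivWithin (n + 1) f (Icc (-1) 1) x| ≤ σ)
    (hS : S.card = n + 1) (hSI : ↑S ⊆ Icc (-1 : ℝ) 1) (hsum : ∑ x ∈ S, x ≤ 1)
    (hx₀ : x₀ ∈ Icc 0 1) :
    iteratedDerivWithin n f (Icc (-1) 1) x₀ ≤
      n.factorial * dividedDiff S f + σ * (1 - (∑ x ∈ S, x) / (n + 1)) := by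
  refine iteratedDerivWithin_le_of_abs_sub_le_quadratic (convex_Icc _ _)
    (uniqueDiffOn_Icc (by norm_num)) hf hσ ordConnected_Icc Subset.rfl hS hSI
    (Icc_subset_Icc_left (by norm_num) hx₀)
    (α := (1 + x₀) / 2) (β := -x₀) (γ := (1 - x₀) / 2) (fun y hy ↦ abs_sub_le_quadratic hx₀ hy.2) ?_
  have hle := mul_le_mul_of_nonneg_left (sq_sum_add_sum_sq_add_le hn hS hSI hsum)
    (sub_nonneg.2 hx₀.2)
  rw [← sub_nonneg]
  have : 0 ≤ ((1 - x₀) * ((n + 1) * (n + 2)) - (1 - x₀) *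
      ((∑ x ∈ S, x) ^ 2 + ∑ x ∈ S, x ^ 2 + 2 * (n + 2) * ∑ x ∈ S, x)) /
        (2 * ((n + 1) * (n + 2))) := div_nonneg (sub_nonneg.2 hle) (by positivity)
  convert this using 1
  field_simp
  ring

lemma exists_linear_majorant_abs_sub {a b : ℝ} (hab : a < b) (x₀ : ℝ) :
    ∃ α β : ℝ, (∀ y ∈ Icc a b, |x₀ - y| ≤ α + β * y) ∧
      2 * α + β * (a + b) = |x₀ - a| + |x₀ - b| := by
  have hpos := sub_pos.2 hab
  refine ⟨(b * |x₀ - a| - a * |x₀ - b|) / (b - a), (|x₀ - b| - |x₀ - a|) / (b - a),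
    fun y ⟨hy, hy'⟩ ↦ ?_, ?_⟩
  · rw [div_mul_eq_mul_div, ← add_div, le_div_iff₀ hpos]
    calc |x₀ - y| * (b - a) = |(b - y) * (x₀ - a) + (y - a) * (x₀ - b)| := by
          rw [← abs_of_pos hpos, ← abs_mul]
          congr 1
          ring
      _ ≤ (b - y) * |x₀ - a| + (y - a) * |x₀ - b| := by
          refine (abs_add_le _ _).trans_eq ?_
          rw [abs_mul, abs_mul, abs_of_nonneg (sub_nonneg.2 hy), abs_of_nonneg (sub_nonneg.2 hy')]
      _ = _ := by ring
  · field_simp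
    ring

lemma iteratedDerivWithin_one_le (hf : NTimesDiffOn 2 f (Icc (-1) 1))
    (hσ : ∀ x ∈ Icc (-1) 1, |iteratedDerivWithin 2 f (Icc (-1) 1) x| ≤ σ)
    (hS : S.card = 2) (hSI : ↑S ⊆ Icc (-1 : ℝ) 1) (hsum : ∑ x ∈ S, x ≤ 1) (hx₀ : x₀ ∈ Icc 0 1) :
    iteratedDerivWithin 1 f (Icc (-1) 1) x₀ ≤
      dividedDiff S f + σ * (1 - (∑ x ∈ S, x) / 2) := by
  obtain ⟨a, b, hab, rfl⟩ : ∃ a b, a < b ∧ S = {a, b} := by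
    obtain ⟨a, b, hne, rfl⟩ := Finset.card_eq_two.1 hS
    rcases hne.lt_or_gt with hab | hba
    · exact ⟨a, b, hab, rfl⟩
    · exact ⟨b, a, hba, Finset.pair_comm a b⟩
  rw [Finset.sum_pair hab.ne] at hsum ⊢
  obtain ⟨h0, h1⟩ := hx₀
  have ha := hSI (Finset.mem_coe.2 (Finset.mem_insert_self a {b}))
  have hb := hSI (Finset.mem_coe.2 (Finset.mem_insert_of_mem (Finset.mem_singleton_self b)))
  have hends : ∀ y ∈ ({a, b} : Finset ℝ), y ∈ Icc a b := by
    simp only [Finset.mem_insert, Finset.mem_singleton, forall_eq_or_imp, forall_eq]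
    exact ⟨left_mem_Icc.2 hab.le, right_mem_Icc.2 hab.le⟩
  obtain ⟨α, β, hmajorant, hmean⟩ := exists_linear_majorant_abs_sub hab x₀
  have hdist : |x₀ - a| + |x₀ - b| ≤ 2 - (a + b) := by
    rcases abs_cases (x₀ - a) with ⟨h, -⟩ | ⟨h, -⟩ <;>
      rcases abs_cases (x₀ - b) with ⟨h', -⟩ | ⟨h', -⟩ <;> rw [h, h'] <;> linarith [hb.2]
  have hle := iteratedDerivWithin_le_of_abs_sub_le_quadratic (n := 1) (convex_Icc _ _)
    (uniqueDiffOn_Icc (by norm_num)) hf hσ ordConnected_Icc (Icc_subset_Icc ha.1 hb.2) hS hends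
    ⟨by linarith, h1⟩ (γ := 0) (by simpa using hmajorant) (c := 1 - (a + b) / 2) ?_
  · simpa using hle
  · rw [Finset.sum_pair hab.ne]
    push_cast
    linarith

lemma iteratedDerivWithin_le_dividedDiff_add (hn : n ≠ 0)
    (hf : NTimesDiffOn (n + 1) f (Icc (-1) 1))
    (hσ : ∀ x ∈ Icc (-1) 1, |iteratedDerivWithin (n + 1) f (Icc (-1) 1) x| ≤ σ)
    (hS : S.card = n + 1) (hSI : ↑S ⊆ Icc (-1 : ℝ) 1) (hsum : ∑ x ∈ S, x ≤ 1)
    (hx₀ : x₀ ∈ Icc 0 1) :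
    iteratedDerivWithin n f (Icc (-1) 1) x₀ ≤
      n.factorial * dividedDiff S f + σ * (1 - (∑ x ∈ S, x) / (n + 1)) := by
  rcases (Nat.one_le_iff_ne_zero.2 hn).eq_or_lt with rfl | hn2
  · simpa [one_add_one_eq_two] using iteratedDerivWithin_one_le hf hσ hS hSI hsum hx₀
  · exact iteratedDerivWithin_le_of_two_le hn2 hf hσ hS hSI hsum hx₀

end UpperBound

section Extremality

variable {n : ℕ} {f : ℝ → ℝ} {σ x : ℝ} {S : Finset ℝ} {p : ℝ[X]}

lemma memW_neg (hf : memW n σ f) : memW n σ fun x ↦ -f x := by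
  obtain ⟨hdiff, hbound, hderiv⟩ := hf
  refine ⟨fun i hi ↦ ?_, fun x hx ↦ ?_, fun x hx ↦ ?_⟩
  · exact (hdiff i hi).neg.congr fun _ _ ↦ iteratedDerivWithin_fun_neg f
  · rw [abs_neg]
    exact hbound x hx
  · rw [iteratedDerivWithin_fun_neg, abs_neg]
    exact hderiv x hx

lemma neg_mem_Icc_neg_one_one (hx : x ∈ Icc (-1 : ℝ) 1) : -x ∈ Icc (-1 : ℝ) 1 :=
  ⟨neg_le_neg hx.2, neg_le.1 hx.1⟩

open scoped Pointwise in
lemma iteratedDerivWithin_comp_neg_Icc (f : ℝ → ℝ) (i : ℕ) (x : ℝ) :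
    iteratedDerivWithin i (fun y ↦ f (-y)) (Icc (-1) 1) x =
      (-1) ^ i * iteratedDerivWithin i f (Icc (-1) 1) (-x) := by
  rw [iteratedDerivWithin_comp_neg, smul_eq_mul, neg_Icc, neg_neg]

lemma abs_iteratedDerivWithin_comp_neg_Icc (f : ℝ → ℝ) (i : ℕ) (x : ℝ) :
    |iteratedDerivWithin i (fun y ↦ f (-y)) (Icc (-1) 1) x| =
      |iteratedDerivWithin i f (Icc (-1) 1) (-x)| := by
  rw [iteratedDerivWithin_comp_neg_Icc, abs_mul, abs_neg_one_pow, one_mul]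

lemma memW_comp_neg (hf : memW n σ f) : memW n σ fun x ↦ f (-x) := by
  obtain ⟨hdiff, hbound, hderiv⟩ := hf
  refine ⟨fun i hi ↦ ?_, fun x hx ↦ hbound _ (neg_mem_Icc_neg_one_one hx), fun x hx ↦ ?_⟩
  · exact (((hdiff i hi).comp differentiableOn_id.neg fun _ ↦ neg_mem_Icc_neg_one_one).const_mul
      _).congr fun x _ ↦ iteratedDerivWithin_comp_neg_Icc f i x
  · rw [abs_iteratedDerivWithin_comp_neg_Icc]
    exact hderiv _ (neg_mem_Icc_neg_one_one hx)

namespace IsExtremalPair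

lemma eval_one_iterate_derivative (h : IsExtremalPair n S p) :
    (derivative^[n] p).eval 1 = n.factorial * dividedDiff S (fun x ↦ p.eval x) +
      (n + 1).factorial * p.coeff (n + 1) * (1 - (∑ x ∈ S, x) / (n + 1)) := by
  rw [eval_iterate_derivative_eq_sum_range two_ne_zero (Nat.lt_succ_of_le h.natDegree_le),
    h.dividedDiff_eval, Nat.factorial_succ]
  simp only [Finset.sum_range_succ, Finset.sum_range_zero, zero_add, Nat.add_comm 1 n,
    Nat.choose_self, Nat.choose_succ_self_right]
  push_cast
  field_simp
  ring

lemma iteratedDerivWithin_le (h : IsExtremalPair n S p) (hn : n ≠ 0) (hsum : ∑ x ∈ S, x ≤ 1)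
    (hf : memW (n + 1) ((n + 1).factorial * p.coeff (n + 1)) f) (hx : x ∈ Icc 0 1) :
    iteratedDerivWithin n f (Icc (-1) 1) x ≤ (derivative^[n] p).eval 1 := by
  obtain ⟨hdiff, hbound, hderiv⟩ := hf
  refine (iteratedDerivWithin_le_dividedDiff_add hn hdiff hderiv h.card_eq h.subset_Icc hsum
    hx).trans ?_
  rw [h.eval_one_iterate_derivative]
  gcongr
  exact h.dividedDiff_le fun x hx ↦ hbound x (h.subset_Icc hx)

lemma abs_iteratedDerivWithin_le (h : IsExtremalPair n S p) (hn : n ≠ 0) (hsum : ∑ x ∈ S, x ≤ 1)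
    (hf : memW (n + 1) ((n + 1).factorial * p.coeff (n + 1)) f) (hx : x ∈ Icc (-1 : ℝ) 1) :
    |iteratedDerivWithin n f (Icc (-1) 1) x| ≤ (derivative^[n] p).eval 1 := by
  wlog hx0 : 0 ≤ x generalizing f x
  · rw [← neg_neg x, ← abs_iteratedDerivWithin_comp_neg_Icc]
    exact this (memW_comp_neg hf) (neg_mem_Icc_neg_one_one hx) (by linarith)
  · refine abs_le'.2 ⟨h.iteratedDerivWithin_le hn hsum hf ⟨hx0, hx.2⟩, ?_⟩
    rw [← iteratedDerivWithin_fun_neg]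
    exact h.iteratedDerivWithin_le hn hsum (memW_neg hf) ⟨hx0, hx.2⟩

lemma memW_eval (h : IsExtremalPair n S p) (hcoeff : 0 ≤ p.coeff (n + 1)) :
    memW (n + 1) ((n + 1).factorial * p.coeff (n + 1)) fun x ↦ p.eval x := by
  have hI : UniqueDiffOn ℝ (Icc (-1 : ℝ) 1) := uniqueDiffOn_Icc (by norm_num)
  refine ⟨nTimesDiffOn_eval hI p _, h.abs_eval_le_one, fun x hx ↦ le_of_eq ?_⟩
  have hderiv := eval_iterate_derivative_eq_sum_range one_ne_zero
    (Nat.lt_succ_of_le h.natDegree_le) x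
  rw [iteratedDerivWithin_eval hI p _ hx]
  beta_reduce
  rw [hderiv]
  simp [abs_of_nonneg hcoeff]

end IsExtremalPair

theorem exists_memW_forall_abs_iteratedDerivWithin_le (hn : n ≠ 0) (hσ0 : 0 ≤ σ)
    (hσn : σ ≤ sigmaN (n + 1)) :
    ∃ g, memW (n + 1) σ g ∧ ∀ f, memW (n + 1) σ f → ∀ x ∈ Icc (-1 : ℝ) 1,
      |iteratedDerivWithin n f (Icc (-1) 1) x| ≤ |iteratedDerivWithin n g (Icc (-1) 1) 1| := by
  have hfac : (0 : ℝ) < (n + 1).factorial := by positivity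
  have hcoeff0 := div_nonneg hσ0 hfac.le
  obtain ⟨S, p, h, hcoeff, hsum⟩ := exists_isExtremalPair_sum_le_one (n := n) hcoeff0
    ((div_le_iff₀ hfac).2 hσn)
  obtain rfl : (n + 1).factorial * p.coeff (n + 1) = σ := by rw [hcoeff, mul_div_cancel₀ _ hfac.ne']
  refine ⟨_, h.memW_eval (hcoeff ▸ hcoeff0), fun f hf x hx ↦ ?_⟩
  rw [iteratedDerivWithin_eval (uniqueDiffOn_Icc (by norm_num)) p n (right_mem_Icc.2 (by norm_num))]
  exact (h.abs_iteratedDerivWithin_le hn hsum hf hx).trans (le_abs_self _)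

end Extremality

end Karlin

/-- Karlin's conjecture for `k = n-1` in the range `0 ≤ σ ≤ σ_n`. -/
theorem karlin_conjecture_k_eq_n_sub_one (n : ℕ) (σ : ℝ) (hn : 2 ≤ n)
    (hσ0 : 0 ≤ σ) (hσn : σ ≤ sigmaN n) :
    ∀ x ∈ Icc (-1:ℝ) 1, mval n (n-1) x σ ≤ mval n (n-1) 1 σ := by
  obtain ⟨n, rfl⟩ := Nat.exists_eq_add_of_le' (Nat.one_le_of_lt hn)
  obtain ⟨g, hg, hmax⟩ :=
    Karlin.exists_memW_forall_abs_iteratedDerivWithin_le (by lia) hσ0 hσn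
  intro x hx
  refine csSup_le ⟨_, g, hg, rfl⟩ ?_
  rintro _ ⟨f, hf, rfl⟩
  refine (hmax f hf x hx).trans (le_csSup
    ⟨|iteratedDerivWithin n g (Icc (-1) 1) 1|, ?_⟩ ⟨g, hg, rfl⟩)
  rintro _ ⟨f, hf, rfl⟩
  exact hmax f hf 1 (right_mem_Icc.2 (by norm_num))
end

section
/- Let n ≥ 2 and 1 ≤ k ≤ n-1. Define the half-line constant B_{n,k} := sup{ |f^{(k)}(1)| : f : ℝ → ℝ is n times differentiable on (-∞,1], |f(x)| ≤ 1 for all x ≤ 1, and |f^{(n)}(x)| ≤ σ_n for all x ≤ 1 }. Then B_{n,k} ≥ (2/e)^{2k} · T_n^{(k)}(1). -/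
open Polynomial Set

/-!
The extremal candidate is `f x = φ (a * (1 - x))`, where `φ` is the entire function with
`φ (w ^ 2) = cos w`. Differentiating `(φ (w ^ 2))'' = -φ (w ^ 2)` gives
`s * φ'' + φ' / 2 + φ / 4 = 0` on the half-line `0 ≤ s`, and each `φ⁽ʲ⁾` satisfies an equation of
the same shape with `j + 1/2` as the coefficient of the first derivative. Sonin's function
`φ⁽ʲ⁾² / 4 + s * φ⁽ʲ⁺¹⁾²` is then decreasing, so `|φ⁽ʲ⁾|` is largest at `0`, where the Taylor
series gives `j! / (2j)!`. Hence `f` is admissible as soon as `aⁿ * n! / (2n)! ≤ σₙ`. For the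
largest such `a`, Stirling's formula yields `(2 / e)² * 2n² ≤ a`, while
`Tₙ⁽ᵏ⁾(1) ≤ (2n²)ᵏ * k! / (2k)!`.

That the supremum is over a bounded set follows from the mean value theorem: if `|f| ≤ 1`, then
every interval of length `2ᵏ - 1` contains a point where `|f⁽ᵏ⁾| ≤ 2ᵏ`, so a bound on `f⁽ᵏ⁺¹⁾`
gives one on `f⁽ᵏ⁾`, and one descends from `k = n`.
-/

section SoninODE

open scoped ContDiff

theorem hasDerivAt_iteratedDeriv {𝕜 F : Type*} [NontriviallyNormedField 𝕜]
    [NormedAddCommGroup F] [NormedSpace 𝕜 F] {f : 𝕜 → F} (hf : ContDiff 𝕜 ∞ f) (j : ℕ) (s : 𝕜) :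
    HasDerivAt (iteratedDeriv j f) (iteratedDeriv (j + 1) f s) s := by
  rw [iteratedDeriv_succ]
  exact (hf.differentiable_iteratedDeriv j (mod_cast ENat.natCast_lt_top j) s).hasDerivAt

variable {f : ℝ → ℝ} {b c : ℝ}

theorem abs_le_abs_zero_of_ode {y y' y'' : ℝ → ℝ} (hb : 1 / 2 ≤ b) (hc : 0 < c)
    (hy : ∀ s ≥ 0, HasDerivWithinAt y (y' s) (Ici 0) s)
    (hy' : ∀ s ≥ 0, HasDerivWithinAt y' (y'' s) (Ici 0) s)
    (hode : ∀ s ≥ 0, s * y'' s + b * y' s + c * y s = 0) {s : ℝ} (hs : 0 ≤ s) :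
    |y s| ≤ |y 0| := by
  let E : ℝ → ℝ := fun t => c * y t ^ 2 + t * y' t ^ 2
  have hE : ∀ t ≥ 0, HasDerivWithinAt E ((1 - 2 * b) * y' t ^ 2) (Ici 0) t := fun t ht => by
    refine ((((hy t ht).pow 2).const_mul c).add
      ((hasDerivWithinAt_id t _).mul ((hy' t ht).pow 2))).congr_deriv ?_
    simp only [id, Pi.pow_apply]
    linear_combination 2 * y' t * hode t ht
  have hanti : AntitoneOn E (Ici 0) :=
    antitoneOn_of_hasDerivWithinAt_nonpos (convex_Ici 0)
      (fun t ht => (hE t ht).continuousWithinAt)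
      (fun t ht => (hE t (interior_subset ht)).mono interior_subset)
      (fun t _ => mul_nonpos_of_nonpos_of_nonneg (by linarith) (sq_nonneg _))
  have hle : c * y s ^ 2 ≤ c * y 0 ^ 2 :=
    calc c * y s ^ 2 ≤ E s := le_add_of_nonneg_right (by positivity)
      _ ≤ E 0 := hanti self_mem_Ici hs hs
      _ = c * y 0 ^ 2 := by simp [E]
  exact sq_le_sq.mp (le_of_mul_le_mul_left hle hc)

theorem ode_iteratedDeriv (hf : ContDiff ℝ ∞ f)
    (hode : ∀ s ≥ 0, s * iteratedDeriv 2 f s + b * iteratedDeriv 1 f s + c * f s = 0) (j : ℕ) :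
    ∀ s ≥ 0, s * iteratedDeriv (j + 2) f s + (b + j) * iteratedDeriv (j + 1) f s
      + c * iteratedDeriv j f s = 0 := by
  induction j with
  | zero => simpa using hode
  | succ j ih =>
    intro s hs
    have hderiv := (((hasDerivAt_id s).mul (hasDerivAt_iteratedDeriv hf (j + 2) s)).add
      ((hasDerivAt_iteratedDeriv hf (j + 1) s).const_mul (b + j))).add
      ((hasDerivAt_iteratedDeriv hf j s).const_mul c)
    have hzero := (hderiv.hasDerivWithinAt (s := Ici 0)).congr_of_mem (f₁ := fun _ => 0)
      (fun t ht => (ih t ht).symm) hs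
    have heq := (uniqueDiffOn_Ici 0 s hs).eq_deriv _ hzero (hasDerivWithinAt_const s _ 0)
    simp only [id] at heq
    push_cast
    linear_combination heq

theorem abs_iteratedDeriv_le_of_ode (hf : ContDiff ℝ ∞ f) (hb : 1 / 2 ≤ b) (hc : 0 < c)
    (hode : ∀ s ≥ 0, s * iteratedDeriv 2 f s + b * iteratedDeriv 1 f s + c * f s = 0)
    (j : ℕ) {s : ℝ} (hs : 0 ≤ s) : |iteratedDeriv j f s| ≤ |iteratedDeriv j f 0| :=
  abs_le_abs_zero_of_ode (le_add_of_le_of_nonneg hb j.cast_nonneg) hc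
    (fun t _ => (hasDerivAt_iteratedDeriv hf j t).hasDerivWithinAt)
    (fun t _ => (hasDerivAt_iteratedDeriv hf (j + 1) t).hasDerivWithinAt)
    (ode_iteratedDeriv hf hode j) hs

end SoninODE

section CosSqrt

open scoped ContDiff

/-- The coefficients `(-1)^m / (2m)!` of the power series of `cos √s`. -/
noncomputable def cosSqrtCoeff (m : ℕ) : ℝ := (-1) ^ m / (2 * m).factorial

/-- The entire function `s ↦ cos √s`, defined by its power series so that it is smooth at `0` and
on the negative half-line (where it is `cosh √(-s)`, whereas `Real.sqrt` is `0`). -/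
noncomputable def cosSqrt : ℝ → ℝ := (FormalMultilinearSeries.ofScalars ℝ cosSqrtCoeff).sum

theorem cosSqrt_sq (w : ℝ) : cosSqrt (w ^ 2) = Real.cos w := by
  have hsum : cosSqrt (w ^ 2) = ∑' m, cosSqrtCoeff m • (w ^ 2) ^ m :=
    FormalMultilinearSeries.ofScalars_sum_eq cosSqrtCoeff (w ^ 2)
  rw [hsum, Real.cos_eq_tsum]
  refine tsum_congr fun m => ?_
  rw [cosSqrtCoeff, smul_eq_mul, ← pow_mul, div_mul_eq_mul_div]

theorem hasFPowerSeriesOnBall_cosSqrt :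
    HasFPowerSeriesOnBall cosSqrt (FormalMultilinearSeries.ofScalars ℝ cosSqrtCoeff) 0 ⊤ := by
  have hradius : (FormalMultilinearSeries.ofScalars ℝ cosSqrtCoeff).radius = ⊤ := by
    refine FormalMultilinearSeries.radius_eq_top_of_summable_norm _ fun r => ?_
    -- the series of norms is that of `cosh √r`
    refine (Real.hasSum_cosh √r).summable.congr fun m => ?_
    rw [FormalMultilinearSeries.ofScalars_norm, cosSqrtCoeff, pow_mul, Real.sq_sqrt r.coe_nonneg]
    simp [div_eq_inv_mul]
  rw [← hradius]
  exact FormalMultilinearSeries.hasFPowerSeriesOnBall _ (by simp [hradius])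

theorem contDiff_cosSqrt {n : ℕ∞ω} : ContDiff ℝ n cosSqrt := by
  have hanalytic := hasFPowerSeriesOnBall_cosSqrt.analyticOnNhd
  rw [Metric.eball_top] at hanalytic
  exact hanalytic.contDiff

theorem contDiff_cosSqrt_mul_const_sub {n : ℕ∞ω} (a b : ℝ) :
    ContDiff ℝ n fun x => cosSqrt (a * (b - x)) :=
  contDiff_cosSqrt.comp (contDiff_const.mul (contDiff_const.sub contDiff_id))

theorem abs_iteratedDeriv_cosSqrt_zero (j : ℕ) :
    |iteratedDeriv j cosSqrt 0| = j.factorial / (2 * j).factorial := by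
  have htaylor := hasFPowerSeriesOnBall_cosSqrt.factorial_smul (1 : ℝ) j
  rw [← iteratedDeriv_eq_iteratedFDeriv, FormalMultilinearSeries.ofScalars_apply_eq] at htaylor
  rw [← htaylor]
  simp [cosSqrtCoeff, abs_mul, div_eq_mul_inv]

theorem ode_cosSqrt {s : ℝ} (hs : 0 ≤ s) :
    s * iteratedDeriv 2 cosSqrt s + 1 / 2 * iteratedDeriv 1 cosSqrt s + 1 / 4 * cosSqrt s = 0 := by
  have hderiv (j : ℕ) (w : ℝ) : HasDerivAt (fun w => iteratedDeriv j cosSqrt (w ^ 2))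
      (iteratedDeriv (j + 1) cosSqrt (w ^ 2) * (2 * w)) w := by
    simpa [Function.comp_def] using
      (hasDerivAt_iteratedDeriv contDiff_cosSqrt j (w ^ 2)).comp w (hasDerivAt_pow 2 w)
  have hfirst (w : ℝ) : iteratedDeriv 1 cosSqrt (w ^ 2) * (2 * w) = -Real.sin w := by
    have hcos := hderiv 0 w
    simp only [iteratedDeriv_zero, cosSqrt_sq] at hcos
    exact hcos.unique (Real.hasDerivAt_cos w)
  have hsecond (w : ℝ) : iteratedDeriv 2 cosSqrt (w ^ 2) * (2 * w) * (2 * w)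
      + iteratedDeriv 1 cosSqrt (w ^ 2) * 2 = -Real.cos w := by
    have hsin := (hderiv 1 w).fun_mul (hasDerivAt_const_mul (x := w) (2 : ℝ))
    simp only [hfirst] at hsin
    exact hsin.unique (Real.hasDerivAt_sin w).neg
  have hroot := hsecond √s
  rw [← cosSqrt_sq, mul_assoc, ← pow_two, mul_pow, Real.sq_sqrt hs] at hroot
  linear_combination hroot / 4

theorem abs_iteratedDeriv_cosSqrt_le (j : ℕ) {s : ℝ} (hs : 0 ≤ s) :
    |iteratedDeriv j cosSqrt s| ≤ j.factorial / (2 * j).factorial := by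
  rw [← abs_iteratedDeriv_cosSqrt_zero]
  exact abs_iteratedDeriv_le_of_ode contDiff_cosSqrt le_rfl (by norm_num)
    (fun _ => ode_cosSqrt) j hs

end CosSqrt

section HalfLine

variable {n k : ℕ} {f : ℝ → ℝ} {b A : ℝ}

theorem hasDerivWithinAt_iteratedDerivWithin {s : Set ℝ} (hf : NTimesDiffOn n f s) (hk : k < n)
    {x : ℝ} (hx : x ∈ s) :
    HasDerivWithinAt (iteratedDerivWithin k f s) (iteratedDerivWithin (k + 1) f s x) s x := by
  rw [iteratedDerivWithin_succ]
  exact (hf k hk x hx).hasDerivWithinAt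

theorem exists_abs_iteratedDerivWithin_Iic_le (hf : NTimesDiffOn n f (Iic b))
    (hA : ∀ x ≤ b, |f x| ≤ A) (hk : k ≤ n) {x : ℝ} (hx : x ≤ b) :
    ∃ y ∈ Icc (x - (2 ^ k - 1)) x, |iteratedDerivWithin k f (Iic b) y| ≤ 2 ^ k * A := by
  induction k generalizing x with
  | zero => exact ⟨x, by simp, by simpa using hA x hx⟩
  | succ k ih =>
    have hpow_pos : (0 : ℝ) < 2 ^ k := by positivity
    obtain ⟨u, hu, hu_le⟩ := ih (by omega) hx
    obtain ⟨v, hv, hv_le⟩ := ih (x := x - 2 ^ k) (by omega) (by linarith [hpow_pos])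
    have hgap : 1 ≤ u - v := by linarith [hu.1, hv.2]
    have hderiv : ∀ t ≤ b, HasDerivWithinAt (iteratedDerivWithin k f (Iic b))
        (iteratedDerivWithin (k + 1) f (Iic b) t) (Iic b) t :=
      fun t ht => hasDerivWithinAt_iteratedDerivWithin hf hk ht
    obtain ⟨y, hy, hslope⟩ := exists_hasDerivAt_eq_slope (iteratedDerivWithin k f (Iic b))
      (iteratedDerivWithin (k + 1) f (Iic b)) (a := v) (b := u) (by linarith)
      (fun t ht => (hderiv t (by linarith [ht.2, hu.2])).continuousWithinAt.mono
        fun r hr => hr.2.trans (hu.2.trans hx))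
      (fun t ht => (hderiv t (by linarith [ht.2, hu.2])).hasDerivAt
        (Iic_mem_nhds (by linarith [ht.2, hu.2])))
    refine ⟨y, ⟨?_, by linarith [hy.2, hu.2]⟩, ?_⟩
    · rw [pow_succ]
      linarith [hy.1, hv.1]
    · rw [hslope, abs_div, abs_of_pos (by linarith : 0 < u - v)]
      refine (div_le_self (abs_nonneg _) hgap).trans ((abs_sub _ _).trans ?_)
      rw [pow_succ]
      linarith

theorem abs_iteratedDerivWithin_Iic_le {C : ℝ} (hf : NTimesDiffOn n f (Iic b))
    (hA : ∀ x ≤ b, |f x| ≤ A) (hk : k < n)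
    (hC : ∀ x ≤ b, |iteratedDerivWithin (k + 1) f (Iic b) x| ≤ C) {x : ℝ} (hx : x ≤ b) :
    |iteratedDerivWithin k f (Iic b) x| ≤ 2 ^ k * A + C * (2 ^ k - 1) := by
  obtain ⟨y, hy, hy_le⟩ := exists_abs_iteratedDerivWithin_Iic_le hf hA hk.le hx
  have hincr : |iteratedDerivWithin k f (Iic b) x - iteratedDerivWithin k f (Iic b) y|
      ≤ C * |x - y| :=
    (convex_Iic b).norm_image_sub_le_of_norm_hasDerivWithin_le
      (fun t ht => hasDerivWithinAt_iteratedDerivWithin hf hk ht) hC (hy.2.trans hx) hx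
  have hC_nonneg : 0 ≤ C := (abs_nonneg _).trans (hC x hx)
  have hdist : C * |x - y| ≤ C * (2 ^ k - 1) := by
    rw [abs_of_nonneg (sub_nonneg.mpr hy.2)]
    exact mul_le_mul_of_nonneg_left (by linarith [hy.1]) hC_nonneg
  linarith [abs_sub_abs_le_abs_sub (iteratedDerivWithin k f (Iic b) x)
    (iteratedDerivWithin k f (Iic b) y)]

theorem exists_forall_abs_iteratedDerivWithin_Iic_le (hk : k ≤ n) (b A σ : ℝ) :
    ∃ C, ∀ f : ℝ → ℝ, NTimesDiffOn n f (Iic b) → (∀ x ≤ b, |f x| ≤ A) →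
      (∀ x ≤ b, |iteratedDerivWithin n f (Iic b) x| ≤ σ) →
      ∀ x ≤ b, |iteratedDerivWithin k f (Iic b) x| ≤ C := by
  induction hk using Nat.decreasingInduction with
  | self => exact ⟨σ, fun _ _ _ hσ => hσ⟩
  | of_succ k hk ih =>
    obtain ⟨C, hC⟩ := ih
    exact ⟨2 ^ k * A + C * (2 ^ k - 1), fun f hf hA hσ x hx =>
      abs_iteratedDerivWithin_Iic_le hf hA hk (hC f hf hA hσ) hx⟩

/-- The values `|f⁽ᵏ⁾(1)|` attained by the functions `f` on `(-∞, 1]` with `|f| ≤ 1` and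
`|f⁽ⁿ⁾| ≤ σ`; the half-line constant `B_{n,k}` is the supremum of this set for `σ = σ_n`. -/
def halfLineDerivValues (n k : ℕ) (σ : ℝ) : Set ℝ :=
  {y | ∃ f : ℝ → ℝ, NTimesDiffOn n f (Iic (1 : ℝ)) ∧
    (∀ x ≤ (1 : ℝ), |f x| ≤ 1) ∧
    (∀ x ≤ (1 : ℝ), |iteratedDerivWithin n f (Iic (1 : ℝ)) x| ≤ σ) ∧
    y = |iteratedDerivWithin k f (Iic (1 : ℝ)) 1|}

theorem bddAbove_halfLineDerivValues (hk : k ≤ n) (σ : ℝ) :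
    BddAbove (halfLineDerivValues n k σ) := by
  obtain ⟨C, hC⟩ := exists_forall_abs_iteratedDerivWithin_Iic_le hk 1 1 σ
  refine ⟨C, ?_⟩
  rintro _ ⟨f, hf, hf_le, hfn_le, rfl⟩
  exact hC f hf hf_le hfn_le 1 le_rfl

theorem nTimesDiffOn_of_contDiff (hf : ContDiff ℝ n f) {s : Set ℝ} (hs : UniqueDiffOn ℝ s) :
    NTimesDiffOn n f s := fun _ hi =>
  hf.contDiffOn.differentiableOn_iteratedDerivWithin (mod_cast hi) hs

theorem iteratedDeriv_comp_mul_const_sub {𝕜 : Type*} [NontriviallyNormedField 𝕜] {f : 𝕜 → 𝕜}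
    (hf : ContDiff 𝕜 n f) (a b x : 𝕜) :
    iteratedDeriv n (fun x => f (a * (b - x))) x = (-a) ^ n * iteratedDeriv n f (a * (b - x)) := by
  rw [iteratedDeriv_comp_const_sub (f := fun x => f (a * x)) (s := b),
    iteratedDeriv_comp_const_mul hf]
  simp only [smul_eq_mul, ← mul_assoc, ← mul_pow, neg_one_mul]

theorem abs_iteratedDerivWithin_cosSqrt_mul_const_sub {a b x : ℝ} (ha : 0 ≤ a) (hx : x ≤ b)
    (j : ℕ) :
    |iteratedDerivWithin j (fun x => cosSqrt (a * (b - x))) (Iic b) x|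
      = a ^ j * |iteratedDeriv j cosSqrt (a * (b - x))| := by
  rw [iteratedDerivWithin_eq_iteratedDeriv (uniqueDiffOn_Iic b)
      (contDiff_cosSqrt_mul_const_sub a b).contDiffAt hx,
    iteratedDeriv_comp_mul_const_sub contDiff_cosSqrt, abs_mul, abs_pow, abs_neg, abs_of_nonneg ha]

theorem pow_mul_mem_halfLineDerivValues (k : ℕ) {a σ : ℝ} (ha : 0 ≤ a)
    (hσ : a ^ n * (n.factorial / (2 * n).factorial) ≤ σ) :
    a ^ k * (k.factorial / (2 * k).factorial) ∈ halfLineDerivValues n k σ := by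
  have hbound (j : ℕ) (x : ℝ) (hx : x ≤ 1) :
      |iteratedDerivWithin j (fun x => cosSqrt (a * (1 - x))) (Iic 1) x|
        ≤ a ^ j * (j.factorial / (2 * j).factorial) := by
    rw [abs_iteratedDerivWithin_cosSqrt_mul_const_sub ha hx]
    exact mul_le_mul_of_nonneg_left
      (abs_iteratedDeriv_cosSqrt_le j (mul_nonneg ha (sub_nonneg.mpr hx))) (pow_nonneg ha j)
  refine ⟨fun x => cosSqrt (a * (1 - x)),
    nTimesDiffOn_of_contDiff (contDiff_cosSqrt_mul_const_sub a 1) (uniqueDiffOn_Iic 1),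
    fun x hx => by simpa using hbound 0 x hx, fun x hx => (hbound n x hx).trans hσ, ?_⟩
  rw [abs_iteratedDerivWithin_cosSqrt_mul_const_sub ha le_rfl, sub_self, mul_zero,
    abs_iteratedDeriv_cosSqrt_zero]

theorem pow_mul_le_sSup_halfLineDerivValues (hk : k ≤ n) {a σ : ℝ} (ha : 0 ≤ a)
    (hσ : a ^ n * (n.factorial / (2 * n).factorial) ≤ σ) :
    a ^ k * (k.factorial / (2 * k).factorial) ≤ sSup (halfLineDerivValues n k σ) :=
  le_csSup (bddAbove_halfLineDerivValues hk σ) (pow_mul_mem_halfLineDerivValues k ha hσ)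

end HalfLine

theorem chebDeriv_one_nonneg (m : ℤ) (k : ℕ) : 0 ≤ chebDeriv m k 1 :=
  (abs_nonneg _).trans (Chebyshev.abs_iterate_derivative_T_real_le m k (x := 1) (by simp))

theorem chebDeriv_one_le (m : ℤ) (k : ℕ) :
    chebDeriv m k 1 ≤ (2 * (m : ℝ) ^ 2) ^ k * (k.factorial / (2 * k).factorial) := by
  induction k with
  | zero => simp [chebDeriv]
  | succ k ih =>
    have hrec : (2 * k + 1) * chebDeriv m (k + 1) 1 = ((m : ℝ) ^ 2 - k ^ 2) * chebDeriv m k 1 :=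
      Chebyshev.iterate_derivative_T_eval_one_recurrence m k
    have hfact : ((k + 1).factorial / (2 * (k + 1)).factorial : ℝ)
        = k.factorial / (2 * k).factorial / (2 * (2 * k + 1)) := by
      rw [show 2 * (k + 1) = 2 * k + 1 + 1 by ring]
      simp only [Nat.factorial_succ]
      push_cast
      field_simp
      ring
    refine le_of_mul_le_mul_left ?_ (by positivity : (0 : ℝ) < 2 * k + 1)
    calc (2 * k + 1) * chebDeriv m (k + 1) 1
        = ((m : ℝ) ^ 2 - k ^ 2) * chebDeriv m k 1 := hrec
      _ ≤ (m : ℝ) ^ 2 * chebDeriv m k 1 :=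
        mul_le_mul_of_nonneg_right (sub_le_self _ (sq_nonneg _)) (chebDeriv_one_nonneg m k)
      _ ≤ (m : ℝ) ^ 2 * ((2 * (m : ℝ) ^ 2) ^ k * (k.factorial / (2 * k).factorial)) := by gcongr
      _ = (2 * k + 1) * ((2 * (m : ℝ) ^ 2) ^ (k + 1)
          * ((k + 1).factorial / (2 * (k + 1)).factorial)) := by
        rw [hfact]
        field_simp
        ring

theorem two_mul_div_exp_pow_le_factorial {m : ℕ} (hm : m ≠ 0) :
    2 * (m / Real.exp 1) ^ m ≤ m.factorial := by
  have hsqrt : 2 ≤ √(2 * Real.pi * m) := by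
    refine Real.le_sqrt_of_sq_le ?_
    have hm_one : (1 : ℝ) ≤ m := mod_cast Nat.one_le_iff_ne_zero.mpr hm
    nlinarith [Real.pi_gt_three]
  exact (mul_le_mul_of_nonneg_right hsqrt (by positivity)).trans (Stirling.le_factorial_stirling m)

theorem exists_pow_mul_eq_sigmaN {n : ℕ} (hn : n ≠ 0) :
    ∃ a : ℝ, 0 ≤ a ∧ a ^ n * (n.factorial / (2 * n).factorial) = sigmaN n := by
  have hnonneg : 0 ≤ sigmaN n / (n.factorial / (2 * n).factorial) := by
    unfold sigmaN
    positivity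
  refine ⟨_ ^ (n : ℝ)⁻¹, Real.rpow_nonneg hnonneg _, ?_⟩
  rw [Real.rpow_inv_natCast_pow hnonneg hn, div_mul_cancel₀ _ (by positivity)]

theorem two_div_exp_sq_mul_le_of_sigmaN_le {n : ℕ} (hn : n ≠ 0) {a : ℝ} (ha : 0 ≤ a)
    (hσ : sigmaN n ≤ a ^ n * (n.factorial / (2 * n).factorial)) :
    (2 / Real.exp 1) ^ 2 * (2 * (n : ℝ) ^ 2) ≤ a := by
  refine le_of_pow_le_pow_left₀ hn ha ?_
  calc ((2 / Real.exp 1) ^ 2 * (2 * (n : ℝ) ^ 2)) ^ n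
      = 2 ^ (n - 1) * (2 * ((2 * n : ℕ) / Real.exp 1) ^ (2 * n)) := by
        rw [← mul_assoc (2 ^ (n - 1)), pow_sub_one_mul hn, pow_mul, ← mul_pow]
        congr 1
        push_cast
        ring
    _ ≤ 2 ^ (n - 1) * (2 * n).factorial := by
        gcongr
        exact two_mul_div_exp_pow_le_factorial (by omega)
    _ = sigmaN n / (n.factorial / (2 * n).factorial) := by
        rw [sigmaN]
        field_simp
    _ ≤ a ^ n := div_le_of_le_mul₀ (by positivity) (by positivity) hσ

/-- lower bound `(2/e)^{2k}·T_n^{(k)}(1)` for the half-line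
Landau--Kolmogorov constant `B_{n,k}`. -/
theorem halfline_constant_lower_bound (n k : ℕ) (hn : 2 ≤ n) (hk1 : 1 ≤ k)
    (hk2 : k ≤ n - 1) :
    (2 / Real.exp 1) ^ (2 * k) * chebDeriv n k 1 ≤
      sSup {y | ∃ f : ℝ → ℝ, NTimesDiffOn n f (Iic (1:ℝ)) ∧
        (∀ x ≤ (1:ℝ), |f x| ≤ 1) ∧
        (∀ x ≤ (1:ℝ), |iteratedDerivWithin n f (Iic (1:ℝ)) x| ≤ sigmaN n) ∧
        y = |iteratedDerivWithin k f (Iic (1:ℝ)) 1|} := by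
  obtain ⟨a, ha, hσ⟩ := exists_pow_mul_eq_sigmaN (n := n) (by omega)
  have ha_ge : (2 / Real.exp 1) ^ 2 * (2 * (n : ℝ) ^ 2) ≤ a :=
    two_div_exp_sq_mul_le_of_sigmaN_le (by omega) ha hσ.ge
  calc (2 / Real.exp 1) ^ (2 * k) * chebDeriv n k 1
      ≤ (2 / Real.exp 1) ^ (2 * k)
          * ((2 * (n : ℝ) ^ 2) ^ k * (k.factorial / (2 * k).factorial)) := by
        gcongr
        exact mod_cast chebDeriv_one_le n k
    _ = ((2 / Real.exp 1) ^ 2 * (2 * (n : ℝ) ^ 2)) ^ k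
          * (k.factorial / (2 * k).factorial) := by
        rw [pow_mul, ← mul_assoc, ← mul_pow]
    _ ≤ a ^ k * (k.factorial / (2 * k).factorial) := by gcongr
    _ ≤ sSup (halfLineDerivValues n k (sigmaN n)) :=
        pow_mul_le_sSup_halfLineDerivValues (by omega) ha hσ.le
end
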